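/- Let S ⊂ ℝ^k be a halfspace, let Σ be an additive subgroup of ℝ^k, and let G ∈ (APW^k_Σ)^{n×n}. Then G admits a canonical left (AP_S)_{ℝ^k} factorization if and only if the Toeplitz operator T(G^T)_{S,ℝ^k} is invertible (where G^T is the transposed matrix function). Moreover, if this is the case, then the operator T(G^T)_{S,Σ} is invertible as well, and any (AP_S)_{ℝ^k} factorization of G is automatically a canonical (APW_S)_Σ factorization. -/

import Mathlib

/- Almost periodic functions of `k` real variables, their Bohr-Fourier
coefficients and spectra, the Wiener algebra, and halfspaces. -/

open MeasureTheory Filter BoundedContinuousFunction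

noncomputable section

/-- The Banach algebra of bounded continuous functions `ℝ^k → ℂ` (sup norm). -/
abbrev APB (k : ℕ) := BoundedContinuousFunction (Fin k → ℝ) ℂ

/-- The elementary exponential `e_λ(x) = e^{i⟨λ,x⟩}` as a bounded continuous function. -/
def apExp (k : ℕ) (lam : Fin k → ℝ) : APB k :=
  BoundedContinuousFunction.ofNormedAddCommGroup
    (fun x => Complex.exp (Complex.I * ((∑ j, lam j * x j : ℝ) : ℂ)))
    (by fun_prop) 1
    (fun x => by
      simp [Complex.norm_exp, Complex.mul_re])

/-- `AP^k`: the closed subalgebra of `L^∞`-type bounded continuous functions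
generated by all exponentials `e_λ`, `λ ∈ ℝ^k`. -/
def APalg (k : ℕ) : Subalgebra ℂ (APB k) :=
  (Algebra.adjoin ℂ (Set.range (apExp k))).topologicalClosure

/-- The Bohr-Fourier coefficient
`f_λ = lim_{T→∞} (2T)^{-k} ∫_{[-T,T]^k} e^{-i⟨λ,x⟩} f(x) dx`. -/
def bohrCoeff (k : ℕ) (f : (Fin k → ℝ) → ℂ) (lam : Fin k → ℝ) : ℂ :=
  limUnder atTop (fun T : ℝ =>
    (((2 * T) ^ k : ℝ) : ℂ)⁻¹ *
      ∫ x in Set.Icc (fun _ => -T : Fin k → ℝ) (fun _ => T),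
        Complex.exp (-(Complex.I * ((∑ j, lam j * x j : ℝ) : ℂ))) * f x)

/-- The Bohr-Fourier spectrum `σ(f) = {λ : f_λ ≠ 0}`. -/
def bohrSpectrum (k : ℕ) (f : (Fin k → ℝ) → ℂ) : Set (Fin k → ℝ) :=
  {lam | bohrCoeff k f lam ≠ 0}

/-- Membership in `AP^k_Δ = {f ∈ AP^k : σ(f) ⊆ Δ}`. -/
def APmem (k : ℕ) (Δ : Set (Fin k → ℝ)) (f : APB k) : Prop :=
  f ∈ APalg k ∧ bohrSpectrum k ⇑f ⊆ Δ

/-- Membership in the Wiener algebra `APW^k_Δ`: almost periodic with spectrum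
in `Δ` and absolutely convergent Bohr-Fourier series. -/
def APWmem (k : ℕ) (Δ : Set (Fin k → ℝ)) (f : APB k) : Prop :=
  APmem k Δ f ∧ Summable (fun lam => ‖bohrCoeff k (⇑f) lam‖)

/-- The Wiener norm `‖f‖_W = ∑_λ |f_λ|`. -/
def wienerNorm (k : ℕ) (f : (Fin k → ℝ) → ℂ) : ℝ :=
  ∑' lam, ‖bohrCoeff k f lam‖

/-- A halfspace `S ⊂ ℝ^k`: `ℝ^k = S ∪ (-S)`, `S ∩ (-S) = {0}`, and `S` is
closed under addition and under multiplication by nonnegative reals. -/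
structure IsHalfspace (k : ℕ) (S : Set (Fin k → ℝ)) : Prop where
  union : S ∪ -S = Set.univ
  inter : S ∩ -S = {0}
  add_mem : ∀ x ∈ S, ∀ y ∈ S, x + y ∈ S
  smul_mem : ∀ x ∈ S, ∀ a : ℝ, 0 ≤ a → a • x ∈ S

/- Left `(AP_S)_Σ` and `(APW_S)_Σ` factorizations of rectangular almost
periodic matrix functions. -/

/-- `G = G⁺ · diag(e_{λ_1},…,e_{λ_p}) · G⁻` is a left `(AP_S)_Σ` factorization
of `G` with factorization indices `lam`: the entries of `G⁺` lie in
`AP^k_{Σ∩S}` and `G⁺` is right invertible over `AP^k_{Σ∩S}`, the entries of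
`G⁻` lie in `AP^k_{Σ∩(-S)}` and `G⁻` is left invertible over `AP^k_{Σ∩(-S)}`,
and all indices lie in `Σ`. -/
def IsAPFactorization (k : ℕ) {m n p : ℕ} (S Sg : Set (Fin k → ℝ))
    (G : Matrix (Fin m) (Fin n) (APB k)) (lam : Fin p → (Fin k → ℝ))
    (Gp : Matrix (Fin m) (Fin p) (APB k)) (Gm : Matrix (Fin p) (Fin n) (APB k)) : Prop :=
  (∀ i j, APmem k (Sg ∩ S) (Gp i j)) ∧
  (∀ i j, APmem k (Sg ∩ (-S)) (Gm i j)) ∧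
  (∀ j, lam j ∈ Sg) ∧
  (∃ Gpr : Matrix (Fin p) (Fin m) (APB k),
      (∀ i j, APmem k (Sg ∩ S) (Gpr i j)) ∧ Gp * Gpr = 1) ∧
  (∃ Gml : Matrix (Fin n) (Fin p) (APB k),
      (∀ i j, APmem k (Sg ∩ (-S)) (Gml i j)) ∧ Gml * Gm = 1) ∧
  G = Gp * Matrix.diagonal (fun j => apExp k (lam j)) * Gm

/-- A left `(APW_S)_Σ` factorization: as `IsAPFactorization`, with the Wiener
algebra `APW` in place of `AP` throughout. -/
def IsAPWFactorization (k : ℕ) {m n p : ℕ} (S Sg : Set (Fin k → ℝ))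
    (G : Matrix (Fin m) (Fin n) (APB k)) (lam : Fin p → (Fin k → ℝ))
    (Gp : Matrix (Fin m) (Fin p) (APB k)) (Gm : Matrix (Fin p) (Fin n) (APB k)) : Prop :=
  (∀ i j, APWmem k (Sg ∩ S) (Gp i j)) ∧
  (∀ i j, APWmem k (Sg ∩ (-S)) (Gm i j)) ∧
  (∀ j, lam j ∈ Sg) ∧
  (∃ Gpr : Matrix (Fin p) (Fin m) (APB k),
      (∀ i j, APWmem k (Sg ∩ S) (Gpr i j)) ∧ Gp * Gpr = 1) ∧
  (∃ Gml : Matrix (Fin n) (Fin p) (APB k),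
      (∀ i j, APWmem k (Sg ∩ (-S)) (Gml i j)) ∧ Gml * Gm = 1) ∧
  G = Gp * Matrix.diagonal (fun j => apExp k (lam j)) * Gm

/- The Besicovitch space and Toeplitz operators.  The Besicovitch space `B^k`
is the Hilbert-space completion of `AP^k` in the inner product `⟨f,g⟩=M{f·ḡ}`;
the exponentials `e_λ` form an orthonormal basis, so `(B^k_Λ)^{n×1}` is
canonically identified (via Bohr-Fourier coefficients) with `ℓ²(Fin n × Λ)`. -/

/-- The column Besicovitch space `(B^k_Λ)^{n×1} ≅ ℓ²(Fin n × Λ)`. -/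
abbrev BesCol (k n : ℕ) (Λ : Set (Fin k → ℝ)) : Type :=
  lp (fun _ : Fin n × ↥Λ => ℂ) 2

/-- `T` is the Toeplitz operator
`T(F)_{S,Λ} : (B^k_{S∩Λ})^{n×1} → (B^k_{S∩Λ})^{m×1}`, `φ ↦ Π_{S∩Λ}(Fφ)`,
characterized by its matrix with respect to the orthonormal basis of
exponentials: `⟪e_ν δ_i , T(e_μ δ_j)⟫ = (F i j)_{ν-μ}` (Bohr-Fourier
coefficient of the `(i,j)` entry at `ν - μ`). -/
def RepresentsToeplitz (k : ℕ) (S Λ : Set (Fin k → ℝ)) (m n : ℕ)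
    (F : Matrix (Fin m) (Fin n) (APB k))
    (T : BesCol k n (S ∩ Λ) →L[ℂ] BesCol k m (S ∩ Λ)) : Prop :=
  ∀ (j : Fin n) (μ : ↥(S ∩ Λ)) (i : Fin m) (ν : ↥(S ∩ Λ)),
    (inner ℂ (lp.single 2 (i, ν) (1 : ℂ)) (T (lp.single 2 (j, μ) (1 : ℂ))) : ℂ) =
      bohrCoeff k (⇑(F i j)) ((ν : Fin k → ℝ) - (μ : Fin k → ℝ))

/-- Invertibility of a continuous linear map. -/
def CLMInvertible {E F : Type*} [NormedAddCommGroup E] [NormedAddCommGroup F]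
    [NormedSpace ℂ E] [NormedSpace ℂ F] (T : E →L[ℂ] F) : Prop :=
  ∃ Tinv : F →L[ℂ] E,
    Tinv.comp T = ContinuousLinearMap.id ℂ E ∧ T.comp Tinv = ContinuousLinearMap.id ℂ F

/-!
An almost periodic function is determined by its Bohr-Fourier coefficients, and `AP^k` acts on the
Besicovitch space by multiplication. Since the entries of `Gᵀ` have spectrum in `Σ`, the operator
`T(Gᵀ)` on `B^k_S` respects the cosets of `Σ`, so an inverse of it restricts to `B^k_{S ∩ Σ}`.

Conjugating a Toeplitz operator by the characters of `ℝ^k` multiplies its entry at `(x, y)` by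
`χ(x - y)`; hence, for a symbol in the Wiener algebra, the operator is an absolutely summable sum of
homogeneous parts. By the Bochner-Phillips theorem the homogeneous parts of its inverse are
absolutely summable too, so the solutions of the Toeplitz equations with constant right-hand side
lie in the Wiener algebra. The solutions for the operator and for its adjoint are the two factors
of `Gᵀ`, up to an invertible constant matrix: that the matrix is invertible uses that `S` is totally
ordered by differences.

Two factorizations are compared through the fact that a function with spectrum both in `S` and
in `-S` is constant.
-/

theorem apExp_apply (k : ℕ) (x y : Fin k → ℝ) :
    apExp k x y = Complex.exp (Complex.I * ((∑ j, x j * y j : ℝ) : ℂ)) := rfl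

theorem apExp_zero (k : ℕ) : apExp k 0 = 1 := by
  ext y
  simp [apExp_apply]

theorem apExp_add (k : ℕ) (x y : Fin k → ℝ) : apExp k (x + y) = apExp k x * apExp k y := by
  ext z
  simp [apExp_apply, ← Complex.exp_add, add_mul, Finset.sum_add_distrib, mul_add]

theorem star_apExp (k : ℕ) (x : Fin k → ℝ) : star (apExp k x) = apExp k (-x) := by
  ext y
  simp [apExp_apply, ← Complex.exp_conj, Complex.conj_ofReal]

theorem norm_apExp_apply (k : ℕ) (x y : Fin k → ℝ) : ‖apExp k x y‖ = 1 := by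
  simp [apExp_apply, Complex.norm_exp]

theorem norm_apExp (k : ℕ) (x : Fin k → ℝ) : ‖apExp k x‖ = 1 :=
  le_antisymm
    ((BoundedContinuousFunction.norm_le zero_le_one).2 fun y => (norm_apExp_apply k x y).le)
    ((norm_apExp_apply k x 0).ge.trans ((apExp k x).norm_coe_le_norm 0))

theorem star_mem_APalg (k : ℕ) {f : APB k} (hf : f ∈ APalg k) : star f ∈ APalg k := by
  have adjoin_le : Algebra.adjoin ℂ (Set.range (apExp k)) ≤
      star (Algebra.adjoin ℂ (Set.range (apExp k))) := by
    refine Algebra.adjoin_le ?_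
    rintro _ ⟨x, rfl⟩
    rw [SetLike.mem_coe, Subalgebra.mem_star_iff, star_apExp]
    exact Algebra.subset_adjoin ⟨-x, rfl⟩
  exact map_mem_closure continuous_star hf fun g hg => adjoin_le hg

/-- `AP^k` as a star subalgebra of the bounded continuous functions. -/
def AP (k : ℕ) : StarSubalgebra ℂ (APB k) :=
  { APalg k with star_mem' := star_mem_APalg k }

instance (k : ℕ) : IsClosed (AP k : Set (APB k)) := Subalgebra.isClosed_topologicalClosure _

instance (k : ℕ) : CommCStarAlgebra (APB k) where

namespace AP

variable {k : ℕ}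

/-- The exponential `e_x` as an element of `AP^k`. -/
def exp (x : Fin k → ℝ) : AP k :=
  ⟨apExp k x, Subalgebra.le_topologicalClosure _ (Algebra.subset_adjoin ⟨x, rfl⟩)⟩

@[simp]
theorem coe_exp (x : Fin k → ℝ) : (exp x : APB k) = apExp k x := rfl

theorem exp_zero : exp (0 : Fin k → ℝ) = 1 := Subtype.ext (apExp_zero k)

theorem exp_add (x y : Fin k → ℝ) : exp (x + y) = exp x * exp y := Subtype.ext (apExp_add k x y)

theorem star_exp (x : Fin k → ℝ) : star (exp x) = exp (-x) := Subtype.ext (star_apExp k x)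

theorem norm_exp (x : Fin k → ℝ) : ‖exp x‖ = 1 := norm_apExp k x

theorem adjoin_apExp_eq_span (k : ℕ) :
    (Algebra.adjoin ℂ (Set.range (apExp k))).toSubmodule =
      Submodule.span ℂ (Set.range (apExp k)) := by
  refine Algebra.adjoin_eq_span_of_subset _ (subset_trans ?_ Submodule.subset_span)
  intro f hf
  induction hf using Submonoid.closure_induction with
  | mem _ h => exact h
  | one => exact ⟨0, apExp_zero k⟩
  | mul f g _ _ hf hg =>
    obtain ⟨x, rfl⟩ := hf
    obtain ⟨y, rfl⟩ := hg
    exact ⟨x + y, apExp_add k x y⟩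

theorem dense_span_exp : Dense (Submodule.span ℂ (Set.range (exp (k := k))) : Set (AP k)) := by
  have image_span : Subtype.val '' (Submodule.span ℂ (Set.range (exp (k := k))) : Set (AP k)) =
      (Algebra.adjoin ℂ (Set.range (apExp k)) : Set (APB k)) := by
    rw [← Subalgebra.coe_toSubmodule, adjoin_apExp_eq_span]
    change (AP k).subtype.toLinearMap '' _ = _
    rw [← Submodule.map_coe, Submodule.map_span, ← Set.range_comp]
    rfl
  refine Subtype.dense_iff.2 fun f hf => ?_
  exact (congrArg closure image_span).symm ▸ hf

theorem clm_ext {σ : ℂ →+* ℂ} {E : Type*} [AddCommGroup E] [Module ℂ E] [TopologicalSpace E]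
    [T2Space E] {S T : AP k →SL[σ] E} (h : ∀ x, S (exp x) = T (exp x)) : S = T :=
  ContinuousLinearMap.ext_on dense_span_exp (Set.forall_mem_range.2 h)

theorem induction_on {p : AP k → Prop} (f : AP k) (exp : ∀ x, p (exp x))
    (add : ∀ f g, p f → p g → p (f + g)) (smul : ∀ (c : ℂ) f, p f → p (c • f))
    (closed : ∀ f, (∀ ε > 0, ∃ g, p g ∧ ‖f - g‖ ≤ ε) → p f) : p f := by
  refine closed f fun ε hε => ?_
  obtain ⟨g, hg, hfg⟩ := Metric.mem_closure_iff.1 (dense_span_exp f) ε hε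
  refine ⟨g, ?_, by rw [← dist_eq_norm]; exact hfg.le⟩
  clear hfg
  induction hg using Submodule.span_induction with
  | mem f h => obtain ⟨x, rfl⟩ := h; exact exp x
  | zero => simpa using smul 0 _ (exp 0)
  | add f g _ _ hf hg => exact add f g hf hg
  | smul c f _ hf => exact smul c f hf

/-- The average of `f` over the cube `[-T, T]^k`. -/
def boxAvg (T : ℝ) : APB k →ₗ[ℂ] ℂ where
  toFun f := (((2 * T) ^ k : ℝ) : ℂ)⁻¹ *
    ∫ x in Set.Icc (fun _ => -T : Fin k → ℝ) (fun _ => T), f x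
  map_add' f g := by
    have integrable (f : APB k) :
        IntegrableOn f (Set.Icc (fun _ => -T : Fin k → ℝ) (fun _ => T)) :=
      f.continuous.continuousOn.integrableOn_compact isCompact_Icc
    simp only [BoundedContinuousFunction.coe_add, Pi.add_apply,
      integral_add (integrable f) (integrable g), mul_add]
  map_smul' c f := by
    simp only [BoundedContinuousFunction.coe_smul, smul_eq_mul, integral_const_mul,
      RingHom.id_apply]
    ring

theorem boxAvg_apply (T : ℝ) (f : APB k) : boxAvg T f = (((2 * T) ^ k : ℝ) : ℂ)⁻¹ *
    ∫ x in Set.Icc (fun _ => -T : Fin k → ℝ) (fun _ => T), f x := rfl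

theorem boxAvg_star (T : ℝ) (f : APB k) : boxAvg T (star f) = star (boxAvg T f) := by
  simp only [boxAvg_apply, BoundedContinuousFunction.coe_star, Pi.star_apply, Complex.star_def,
    map_mul, map_inv₀, Complex.conj_ofReal, ← integral_conj]

theorem volume_real_box (k : ℕ) {T : ℝ} (hT : 0 < T) :
    volume.real (Set.Icc (fun _ => -T : Fin k → ℝ) (fun _ => T)) = (2 * T) ^ k := by
  rw [Measure.real, Real.volume_Icc_pi_toReal (fun _ => by linarith)]
  simp [two_mul]

theorem norm_boxAvg_le {T : ℝ} (hT : 0 < T) (f : APB k) : ‖boxAvg T f‖ ≤ ‖f‖ := by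
  have hpos : (0 : ℝ) < (2 * T) ^ k := by positivity
  have h := norm_setIntegral_le_of_norm_le_const (μ := volume) (f := f)
    (isCompact_Icc (a := fun _ : Fin k => -T) (b := fun _ => T)).measure_lt_top
    fun x _ => f.norm_coe_le_norm x
  rw [volume_real_box k hT, mul_comm] at h
  rwa [boxAvg_apply, norm_mul, norm_inv, Complex.norm_real, Real.norm_of_nonneg hpos.le,
    inv_mul_le_iff₀ hpos]

/-- The average of `e^{iax}` over the interval `[-T, T]`. -/
def intervalAvg (a T : ℝ) : ℂ :=
  ((2 * T : ℝ) : ℂ)⁻¹ * ∫ x in (-T)..T, Complex.exp (Complex.I * ((a * x : ℝ) : ℂ))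

theorem intervalAvg_zero {T : ℝ} (hT : 0 < T) : intervalAvg 0 T = 1 := by
  have integral_one : ∫ x in (-T)..T, Complex.exp (Complex.I * ((0 * x : ℝ) : ℂ)) =
      ((2 * T : ℝ) : ℂ) := by
    simp [two_mul]
  rw [intervalAvg, integral_one, inv_mul_cancel₀ (Complex.ofReal_ne_zero.2 (by positivity))]

theorem norm_intervalAvg_le {a : ℝ} (ha : a ≠ 0) {T : ℝ} (hT : 0 < T) :
    ‖intervalAvg a T‖ ≤ (2 * T)⁻¹ * (2 / |a|) := by
  have hc : Complex.I * (a : ℂ) ≠ 0 := by simp [ha]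
  have integrand (x : ℝ) : Complex.exp (Complex.I * ((a * x : ℝ) : ℂ)) =
      Complex.exp (Complex.I * (a : ℂ) * x) := by
    push_cast; ring_nf
  have norm_endpoint (x : ℝ) : ‖Complex.exp (Complex.I * (a : ℂ) * x)‖ = 1 := by
    simp [Complex.norm_exp]
  simp only [intervalAvg, integrand]
  rw [integral_exp_mul_complex hc, norm_mul, norm_div, norm_inv, Complex.norm_real,
    Real.norm_of_nonneg (by positivity), norm_mul, Complex.norm_I, one_mul, Complex.norm_real,
    Real.norm_eq_abs]
  gcongr
  refine (norm_sub_le _ _).trans ?_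
  rw [norm_endpoint, norm_endpoint, one_add_one_eq_two]

theorem tendsto_intervalAvg (a : ℝ) :
    Tendsto (intervalAvg a) atTop (nhds (if a = 0 then 1 else 0)) := by
  split_ifs with ha
  · subst ha
    exact tendsto_const_nhds.congr' ((eventually_gt_atTop 0).mono fun T hT =>
      (intervalAvg_zero hT).symm)
  · have hlim : Tendsto (fun T : ℝ => (2 * T)⁻¹ * (2 / |a|)) atTop (nhds 0) := by
      simpa using (tendsto_inv_atTop_zero.comp (tendsto_id.const_mul_atTop two_pos)).mul_const
        (2 / |a|)
    exact squeeze_zero_norm' ((eventually_gt_atTop 0).mono fun T hT =>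
      norm_intervalAvg_le ha hT) hlim

theorem boxAvg_apExp {T : ℝ} (hT : 0 < T) (x : Fin k → ℝ) :
    boxAvg T (apExp k x) = ∏ j, intervalAvg (x j) T := by
  simp only [intervalAvg, intervalIntegral.integral_of_le (neg_le_self hT.le),
    ← integral_Icc_eq_integral_Ioc]
  rw [Finset.prod_mul_distrib, boxAvg_apply, ← Set.pi_univ_Icc, volume_pi,
    Measure.restrict_pi_pi, ← integral_fintype_prod_eq_prod]
  congr 1
  · simp [mul_pow, mul_comm]
  · congr with y
    rw [apExp_apply, ← Complex.exp_sum, Complex.ofReal_sum, Finset.mul_sum]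

theorem tendsto_boxAvg_apExp (x : Fin k → ℝ) :
    Tendsto (fun T => boxAvg T (apExp k x)) atTop (nhds (if x = 0 then 1 else 0)) := by
  have h : Tendsto (fun T => ∏ j, intervalAvg (x j) T) atTop
      (nhds (∏ j, if x j = 0 then 1 else 0)) :=
    tendsto_finsetProd _ fun j _ => tendsto_intervalAvg (x j)
  have hprod : (∏ j, if x j = 0 then (1 : ℂ) else 0) = if x = 0 then 1 else 0 := by
    simp [Finset.prod_ite_zero, funext_iff]
  rw [hprod] at h
  exact h.congr' ((eventually_gt_atTop 0).mono fun T hT => (boxAvg_apExp hT x).symm)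

theorem exists_tendsto_boxAvg (f : AP k) :
    ∃ l, Tendsto (fun T => boxAvg T (f : APB k)) atTop (nhds l) := by
  induction f using induction_on with
  | exp x => exact ⟨_, tendsto_boxAvg_apExp x⟩
  | add f g hf hg =>
    obtain ⟨l, hl⟩ := hf
    obtain ⟨m, hm⟩ := hg
    exact ⟨l + m, by simpa using hl.add hm⟩
  | smul c f hf =>
    obtain ⟨l, hl⟩ := hf
    exact ⟨c * l, by simpa using hl.const_mul c⟩
  | closed f hf =>
    rw [← cauchy_map_iff_exists_tendsto, Metric.cauchy_iff]
    refine ⟨inferInstance, fun ε hε => ?_⟩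
    obtain ⟨g, ⟨l, hl⟩, hfg⟩ := hf (ε / 4) (by positivity)
    have eventually_near : ∀ᶠ T in atTop, dist (boxAvg T (f : APB k)) l < ε / 2 := by
      filter_upwards [Metric.tendsto_nhds.1 hl (ε / 5) (by positivity), eventually_gt_atTop 0]
        with T hT hTpos
      have h1 := (norm_boxAvg_le hTpos (f - g : APB k)).trans hfg
      rw [map_sub, ← dist_eq_norm] at h1
      linarith [dist_triangle (boxAvg T (f : APB k)) (boxAvg T (g : APB k)) l]
    refine ⟨Metric.ball l (ε / 2), eventually_near, fun x hx y hy => ?_⟩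
    rw [Metric.mem_ball] at hx hy
    linarith [dist_triangle_right x y l]

theorem tendsto_boxAvg (f : AP k) :
    Tendsto (fun T => boxAvg T (f : APB k)) atTop (nhds (limUnder atTop fun T =>
      boxAvg T (f : APB k))) :=
  tendsto_nhds_limUnder (exists_tendsto_boxAvg f)

/-- The Bohr mean. -/
def mean : AP k →L[ℂ] ℂ :=
  LinearMap.mkContinuous
    { toFun := fun f => limUnder atTop fun T => boxAvg T (f : APB k)
      map_add' := fun f g => tendsto_nhds_unique (tendsto_boxAvg (f + g)) <| by
        simpa using (tendsto_boxAvg f).add (tendsto_boxAvg g)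
      map_smul' := fun c f => tendsto_nhds_unique (tendsto_boxAvg (c • f)) <| by
        simpa using (tendsto_boxAvg f).const_mul c }
    1 fun f => by
      rw [one_mul]
      exact le_of_tendsto (tendsto_boxAvg f).norm
        ((eventually_gt_atTop 0).mono fun T hT => norm_boxAvg_le hT (f : APB k))

theorem tendsto_mean (f : AP k) : Tendsto (fun T => boxAvg T (f : APB k)) atTop (nhds (mean f)) :=
  tendsto_boxAvg f

theorem mean_exp (x : Fin k → ℝ) : mean (exp x) = if x = 0 then 1 else 0 :=
  tendsto_nhds_unique (tendsto_mean (exp x)) (tendsto_boxAvg_apExp x)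

theorem mean_star (f : AP k) : mean (star f) = star (mean f) :=
  tendsto_nhds_unique (tendsto_mean (star f)) <|
    ((continuous_star.tendsto _).comp (tendsto_mean f)).congr fun T => (boxAvg_star T _).symm

open ComplexOrder in
theorem mean_nonneg {f : AP k} (hf : ∀ y, 0 ≤ (f : APB k) y) : 0 ≤ mean f := by
  refine ge_of_tendsto (tendsto_mean f) ((eventually_gt_atTop 0).mono fun T hT => ?_)
  rw [boxAvg_apply, ← Complex.ofReal_inv]
  exact mul_nonneg (by exact_mod_cast (by positivity)) (integral_nonneg hf)

/-- The Bohr-Fourier coefficient at `x`, as a continuous functional on `AP^k`. -/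
def coeff (x : Fin k → ℝ) : AP k →L[ℂ] ℂ :=
  mean ∘L ContinuousLinearMap.mul ℂ (AP k) (exp (-x))

theorem coeff_apply (x : Fin k → ℝ) (f : AP k) : coeff x f = mean (exp (-x) * f) := rfl

theorem coeff_zero_left (f : AP k) : coeff 0 f = mean f := by
  rw [coeff_apply, neg_zero, exp_zero, one_mul]

theorem bohrCoeff_coe (f : AP k) (x : Fin k → ℝ) :
    bohrCoeff k (f : APB k) x = coeff x f := by
  have h := (tendsto_mean (exp (-x) * f)).limUnder_eq
  rw [coeff_apply, ← h, bohrCoeff]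
  congr! 2 with T
  simp [boxAvg_apply, apExp_apply]

theorem coeff_exp (x y : Fin k → ℝ) : coeff x (exp y) = if y = x then 1 else 0 := by
  rw [coeff_apply, ← exp_add, mean_exp]
  simp only [neg_add_eq_zero, eq_comm]

theorem coeff_exp_mul (x y : Fin k → ℝ) (f : AP k) : coeff x (exp y * f) = coeff (x - y) f := by
  rw [coeff_apply, coeff_apply, ← mul_assoc, ← exp_add, neg_sub, neg_add_eq_sub]

theorem coeff_star (x : Fin k → ℝ) (f : AP k) : coeff x (star f) = star (coeff (-x) f) := by
  rw [coeff_apply, coeff_apply, ← mean_star, star_mul, star_exp, neg_neg, mul_comm]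

theorem apExp_compContinuous_addRight (t x : Fin k → ℝ) :
    (apExp k x).compContinuous (ContinuousMap.addRight t) = apExp k x t • apExp k x := by
  ext y
  simp [apExp_apply, ← Complex.exp_add, mul_add, Finset.sum_add_distrib, add_comm]

theorem compContinuous_addRight_mem (t : Fin k → ℝ) (f : AP k) :
    (f : APB k).compContinuous (ContinuousMap.addRight t) ∈ AP k := by
  let L : AP k →L[ℂ] APB k := (BoundedContinuousFunction.compContinuousCLM ℂ ℂ
    (ContinuousMap.addRight t)).comp (AP k).toSubalgebra.toSubmodule.subtypeL
  have span_le : Submodule.span ℂ (Set.range exp) ≤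
      (AP k).toSubalgebra.toSubmodule.comap L.toLinearMap := by
    refine Submodule.span_le.2 (Set.range_subset_iff.2 fun x => ?_)
    change (apExp k x).compContinuous (ContinuousMap.addRight t) ∈ AP k
    rw [apExp_compContinuous_addRight]
    exact (apExp k x t • exp x).2
  exact closure_minimal (t := L ⁻¹' (AP k)) span_le
    (IsClosed.preimage L.continuous inferInstance) (dense_span_exp f)

/-- The translation operator `f ↦ f (· + t)` on `AP^k`. -/
def translate (t : Fin k → ℝ) : AP k →L[ℂ] AP k :=
  LinearMap.mkContinuous
    { toFun := fun f => ⟨_, compContinuous_addRight_mem t f⟩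
      map_add' := fun _ _ => rfl
      map_smul' := fun _ _ => rfl }
    1 fun f => by
      rw [one_mul]
      exact BoundedContinuousFunction.norm_compContinuous_le _ _

theorem translate_apply (t : Fin k → ℝ) (f : AP k) (y : Fin k → ℝ) :
    (translate t f : APB k) y = (f : APB k) (y + t) := rfl

theorem norm_translate_le (t : Fin k → ℝ) (f : AP k) : ‖translate t f‖ ≤ ‖f‖ :=
  BoundedContinuousFunction.norm_compContinuous_le _ _

theorem translate_exp (t x : Fin k → ℝ) : translate t (exp x) = apExp k x t • exp x :=
  Subtype.ext (apExp_compContinuous_addRight t x)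

theorem mean_translate (t : Fin k → ℝ) (f : AP k) : mean (translate t f) = mean f := by
  have : mean.comp (translate t) = mean := clm_ext fun x => by
    rw [ContinuousLinearMap.comp_apply, translate_exp, map_smul, mean_exp]
    split_ifs with hx
    · simp [hx, apExp_zero]
    · simp
  exact DFunLike.congr_fun this f

theorem totallyBounded_translate (f : AP k) :
    TotallyBounded (Set.range fun t => translate t f) := by
  induction f using induction_on with
  | exp x =>
    refine ((isCompact_closedBall (0 : ℂ) 1).image (f := fun c => c • exp x)
      (by fun_prop)).totallyBounded.subset ?_
    rintro _ ⟨t, rfl⟩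
    exact ⟨apExp k x t, by simp [norm_apExp_apply], (translate_exp t x).symm⟩
  | add f g hf hg =>
    refine ((hf.closure.isCompact_of_isClosed isClosed_closure).add
      (hg.closure.isCompact_of_isClosed isClosed_closure)).totallyBounded.subset ?_
    rintro _ ⟨t, rfl⟩
    exact Set.add_mem_add (subset_closure (Set.mem_range_self t))
      (subset_closure (Set.mem_range_self t))
  | smul c f hf =>
    refine (hf.image (uniformContinuous_const_smul c)).subset ?_
    rintro _ ⟨t, rfl⟩
    exact ⟨translate t f, ⟨t, rfl⟩, (map_smul (translate t) c f).symm⟩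
  | closed f hf =>
    refine Metric.totallyBounded_iff.2 fun ε hε => ?_
    obtain ⟨g, hg, hfg⟩ := hf (ε / 2) (by positivity)
    obtain ⟨s, hs, hcov⟩ := Metric.totallyBounded_iff.1 hg (ε / 2) (by positivity)
    refine ⟨s, hs, Set.range_subset_iff.2 fun t => ?_⟩
    obtain ⟨h, hh, hd⟩ := Set.mem_iUnion₂.1 (hcov ⟨t, rfl⟩)
    have hfg_t : dist (translate t f) (translate t g) ≤ ε / 2 := by
      rw [dist_eq_norm, ← map_sub]
      exact (norm_translate_le t _).trans hfg
    exact Set.mem_iUnion₂.2 ⟨h, hh, (dist_triangle _ _ _).trans_lt (by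
      linarith [Metric.mem_ball.1 hd])⟩

theorem exists_finset_translate_near (f : AP k) {ε : ℝ} (hε : 0 < ε) :
    ∃ s : Finset (Fin k → ℝ), ∀ t, ∃ u ∈ s, ‖translate t f - translate u f‖ < ε := by
  obtain ⟨c, hsub, hfin, hcov⟩ := Metric.finite_approx_of_totallyBounded
    (totallyBounded_translate f) ε hε
  choose! τ hτ using show ∀ g ∈ c, ∃ t, translate t f = g from fun g hg => hsub hg
  refine ⟨hfin.toFinset.image τ, fun t => ?_⟩
  obtain ⟨g, hg, hd⟩ := Set.mem_iUnion₂.1 (hcov ⟨t, rfl⟩)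
  refine ⟨τ g, Finset.mem_image_of_mem _ (hfin.mem_toFinset.2 hg), ?_⟩
  rwa [hτ g hg, ← dist_eq_norm]

open ComplexOrder in
-- Finitely many translates of `f ≥ 0` suffice to keep their sum away from zero everywhere.
theorem eq_zero_of_mean_eq_zero {f : AP k} (hf : ∀ y, 0 ≤ (f : APB k) y) (h0 : mean f = 0) :
    f = 0 := by
  by_contra hne
  obtain ⟨y₀, hy₀⟩ : ∃ y, (f : APB k) y ≠ 0 := by
    by_contra! hall
    exact hne (Subtype.ext (BoundedContinuousFunction.ext hall))
  set c : ℝ := ((f : APB k) y₀).re with hc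
  have hcpos : 0 < c := (Complex.pos_iff.1 ((hf y₀).lt_of_ne' hy₀)).1
  obtain ⟨s, hs⟩ := exists_finset_translate_near f (half_pos hcpos)
  have near (y : Fin k → ℝ) : ∃ u ∈ s, c / 2 ≤ ((f : APB k) (y + (y₀ - u))).re := by
    obtain ⟨u, hu, hlt⟩ := hs y
    refine ⟨u, hu, ?_⟩
    have h := ((Complex.abs_re_le_norm _).trans
      ((translate y f - translate u f : APB k).norm_coe_le_norm (y₀ - u))).trans hlt.le
    rw [BoundedContinuousFunction.sub_apply, translate_apply, translate_apply, sub_add_cancel,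
      Complex.sub_re, ← hc, add_comm] at h
    linarith [neg_le_of_abs_le h]
  have sum_ge (y : Fin k → ℝ) :
      0 ≤ ((∑ u ∈ s, translate (y₀ - u) f - ((c / 2 : ℝ) : ℂ) • 1 : AP k) : APB k) y := by
    obtain ⟨u, hu, hle⟩ := near y
    have term_le : ((c / 2 : ℝ) : ℂ) ≤ (translate (y₀ - u) f : APB k) y :=
      Complex.le_def.2 ⟨hle, (Complex.nonneg_iff.1 (hf _)).2⟩
    have single_le := Finset.single_le_sum
      (f := fun u => (translate (y₀ - u) f : APB k) y) (fun u _ => hf _) hu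
    simpa using term_le.trans single_le
  have mean_sum := mean_nonneg sum_ge
  simp only [map_sub, map_sum, mean_translate, h0, Finset.sum_const_zero, map_smul,
    ← exp_zero, mean_exp, if_pos, smul_eq_mul, mul_one, zero_sub] at mean_sum
  have := (Complex.nonneg_iff.1 mean_sum).1
  rw [Complex.neg_re, Complex.ofReal_re] at this
  linarith

open ComplexOrder in
theorem eq_zero_of_coeff_eq_zero {f : AP k} (hf : ∀ x, coeff x f = 0) : f = 0 := by
  have mean_mul : mean.comp (ContinuousLinearMap.mul ℂ (AP k) f) = 0 := clm_ext fun x => by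
    simpa [coeff_apply, mul_comm] using hf (-x)
  exact CStarRing.star_mul_self_eq_zero_iff f |>.1 <|
    eq_zero_of_mean_eq_zero (fun y => star_mul_self_nonneg ((f : APB k) y)) <| by
      rw [mul_comm]
      exact DFunLike.congr_fun mean_mul (star f)

theorem ext_coeff {f g : AP k} (h : ∀ x, coeff x f = coeff x g) : f = g :=
  sub_eq_zero.1 (eq_zero_of_coeff_eq_zero fun x => by rw [map_sub, h, sub_self])

/-- The almost periodic function with absolutely summable Bohr-Fourier coefficients `a`. -/
def wienerSeries (a : (Fin k → ℝ) → ℂ) : AP k := ∑' x, a x • exp x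

theorem hasSum_wienerSeries {a : (Fin k → ℝ) → ℂ} (ha : Summable fun x => ‖a x‖) :
    HasSum (fun x => a x • exp x) (wienerSeries a) :=
  (Summable.of_norm_bounded ha fun x => by rw [norm_smul, norm_exp, mul_one]).hasSum

theorem coeff_wienerSeries {a : (Fin k → ℝ) → ℂ} (ha : Summable fun x => ‖a x‖)
    (x : Fin k → ℝ) : coeff x (wienerSeries a) = a x := by
  refine ((coeff x).hasSum (hasSum_wienerSeries ha)).unique ?_
  convert hasSum_single x fun y hy => ?_ using 1
  · simp [coeff_exp]
  · simp [coeff_exp, hy]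

instance : PartialOrder (AP k) := CStarAlgebra.spectralOrder (AP k)

instance : StarOrderedRing (AP k) := CStarAlgebra.spectralOrderedRing (AP k)

open ComplexOrder in
/-- The Bohr mean as a positive linear functional. -/
def positiveMean (k : ℕ) : AP k →ₚ[ℂ] ℂ :=
  PositiveLinearMap.mk₀ mean.toLinearMap fun f hf => by
    obtain ⟨g, rfl⟩ := CStarAlgebra.nonneg_iff_eq_star_mul_self.1 hf
    exact mean_nonneg fun y => star_mul_self_nonneg ((g : APB k) y)

/-- The Besicovitch space `B^k`, as the GNS space of the Bohr mean. -/
abbrev Besicovitch (k : ℕ) : Type := (positiveMean k).GNS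

/-- The action of `AP^k` on `B^k` by multiplication operators. -/
def mulOp : AP k →⋆ₐ[ℂ] (Besicovitch k →L[ℂ] Besicovitch k) := (positiveMean k).gnsStarAlgHom

/-- The inclusion of `AP^k` into `B^k`. -/
def toBesicovitch : AP k →L[ℂ] Besicovitch k :=
  LinearMap.mkContinuous
    { toFun := fun f => ((positiveMean k).toPreGNS f : (positiveMean k).GNS)
      map_add' := fun f g => by rw [map_add, UniformSpace.Completion.coe_add]
      map_smul' := fun c f => by rw [map_smul, UniformSpace.Completion.coe_smul, RingHom.id_apply] }
    ‖((positiveMean k).toPreGNS 1 : (positiveMean k).GNS)‖ fun f => by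
      have h := (mulOp f).le_opNorm ((positiveMean k).toPreGNS 1 : (positiveMean k).GNS)
      rw [mul_comm]
      refine (le_trans ?_ h).trans (mul_le_mul_of_nonneg_right
        (NonUnitalStarAlgHom.norm_apply_le mulOp f) (norm_nonneg _))
      simp [mulOp]

theorem toBesicovitch_apply (f : AP k) :
    toBesicovitch f = ((positiveMean k).toPreGNS f : (positiveMean k).GNS) := rfl

theorem mulOp_toBesicovitch (f g : AP k) :
    mulOp f (toBesicovitch g) = toBesicovitch (f * g) := by
  simp [mulOp, toBesicovitch_apply]

theorem inner_toBesicovitch (f g : AP k) :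
    inner ℂ (toBesicovitch f) (toBesicovitch g) = mean (star f * g) := by
  exact UniformSpace.Completion.inner_coe ((positiveMean k).toPreGNS f)
    ((positiveMean k).toPreGNS g)

theorem denseRange_toBesicovitch : DenseRange (toBesicovitch (k := k)) :=
  UniformSpace.Completion.denseRange_coe (α := (positiveMean k).PreGNS)

theorem inner_toBesicovitch_exp (x : Fin k → ℝ) (f : AP k) :
    inner ℂ (toBesicovitch (exp x)) (toBesicovitch f) = coeff x f := by
  rw [inner_toBesicovitch, star_exp, coeff_apply]

theorem orthonormal_toBesicovitch_exp :
    Orthonormal ℂ fun x : Fin k → ℝ => toBesicovitch (exp x) :=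
  orthonormal_iff_ite.2 fun x y => by
    rw [inner_toBesicovitch_exp, coeff_exp]
    simp only [eq_comm]

/-- The exponentials `e_x` as an orthonormal basis of `B^k`. -/
def expBasis (k : ℕ) : HilbertBasis (Fin k → ℝ) ℂ (Besicovitch k) :=
  HilbertBasis.mk orthonormal_toBesicovitch_exp <| by
    have := denseRange_toBesicovitch.topologicalClosure_map_submodule (f := toBesicovitch)
      (Submodule.dense_iff_topologicalClosure_eq_top.1 (dense_span_exp (k := k)))
    rw [Submodule.map_span, ← Set.range_comp] at this
    exact this.ge

theorem expBasis_apply (x : Fin k → ℝ) : expBasis k x = toBesicovitch (exp x) := by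
  rw [expBasis, HilbertBasis.coe_mk]

theorem inner_expBasis_toBesicovitch (x : Fin k → ℝ) (f : AP k) :
    inner ℂ (expBasis k x) (toBesicovitch f) = coeff x f := by
  rw [expBasis_apply, inner_toBesicovitch_exp]

theorem mulOp_expBasis (f : AP k) (x : Fin k → ℝ) :
    mulOp f (expBasis k x) = toBesicovitch (exp x * f) := by
  rw [expBasis_apply, mulOp_toBesicovitch, mul_comm]

theorem inner_expBasis_mulOp_expBasis (f : AP k) (x y : Fin k → ℝ) :
    inner ℂ (expBasis k y) (mulOp f (expBasis k x)) = coeff (y - x) f := by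
  rw [mulOp_expBasis, inner_expBasis_toBesicovitch, coeff_exp_mul]

theorem hasSum_coeff_mul (f g : AP k) (x : Fin k → ℝ) :
    HasSum (fun y => coeff (x - y) f * coeff y g) (coeff x (f * g)) := by
  have h := (expBasis k).hasSum_inner_mul_inner (mulOp (star f) (expBasis k x)) (toBesicovitch g)
  rw [map_star, ContinuousLinearMap.star_eq_adjoint, ContinuousLinearMap.adjoint_inner_left,
    mulOp_toBesicovitch, inner_expBasis_toBesicovitch] at h
  simpa only [ContinuousLinearMap.adjoint_inner_left, inner_expBasis_mulOp_expBasis,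
    inner_expBasis_toBesicovitch] using h

section Toeplitz

open scoped Matrix InnerProduct

variable {Λ Λ' : Set (Fin k → ℝ)} {ι κ : Type*}

/-- The column space `(B^k_Λ)^ι`, in the coordinates of the orthonormal basis of exponentials. -/
abbrev Column (ι : Type*) (Λ : Set (Fin k → ℝ)) : Type _ := lp (fun _ : ι × Λ => ℂ) 2

/-- The basis vector of `(B^k_Λ)^ι` with the exponential `e_x` in position `i`, for `q = (i, x)`. -/
abbrev Column.basisVec [DecidableEq ι] (q : ι × Λ) : Column ι Λ := lp.single 2 q 1

theorem Column.basisVec_apply [DecidableEq ι] (p q : ι × Λ) :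
    (basisVec q : Column ι Λ) p = if p = q then 1 else 0 := by
  rw [lp.single_apply, Pi.single_apply]

theorem Column.inner_basisVec_left [DecidableEq ι] (q : ι × Λ) (v : Column ι Λ) :
    inner ℂ (basisVec q) v = v q := by
  rw [lp.inner_single_left]
  simp

theorem Column.orthonormal_basisVec [DecidableEq ι] :
    Orthonormal ℂ (basisVec : ι × Λ → Column ι Λ) :=
  orthonormal_iff_ite.2 fun p q => by rw [inner_basisVec_left, basisVec_apply]

theorem Column.ext_basisVec [DecidableEq ι] {E : Type*} [AddCommMonoid E] [Module ℂ E]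
    [TopologicalSpace E] [T2Space E] {S T : Column ι Λ →L[ℂ] E}
    (h : ∀ q, S (basisVec q) = T (basisVec q)) : S = T :=
  lp.ext_continuousLinearMap ENNReal.ofNat_ne_top fun q => by
    ext
    exact h q

theorem Column.ext_entries [DecidableEq ι] {S T : Column ι Λ →L[ℂ] Column κ Λ'}
    (h : ∀ p q, S (basisVec q) p = T (basisVec q) p) : S = T :=
  ext_basisVec fun q => lp.ext (funext fun p => h p q)

theorem Column.adjoint_basisVec_apply [DecidableEq ι] [DecidableEq κ]
    (T : Column ι Λ →L[ℂ] Column κ Λ) (p : ι × Λ) (q : κ × Λ) :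
    (T†) (basisVec q) p = star (T (basisVec p) q) := by
  rw [← inner_basisVec_left, ContinuousLinearMap.adjoint_inner_right, ← inner_conj_symm,
    inner_basisVec_left]
  rfl

/-- The isometry from `(B^k_Λ')^ι` to `(B^k_Λ)^ι` that moves the frequencies along `e`. -/
def Column.embed [DecidableEq ι] (e : Λ' ↪ Λ) : Column ι Λ' →ₗᵢ[ℂ] Column ι Λ :=
  ((orthonormal_basisVec.comp (Prod.map id e)
    (Function.injective_id.prodMap e.injective)).orthogonalFamily).linearIsometry

theorem Column.embed_basisVec [DecidableEq ι] (e : Λ' ↪ Λ) (p : ι × Λ') :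
    embed e (basisVec p) = basisVec (p.1, e p.2) := by
  rw [embed, OrthogonalFamily.linearIsometry_apply_single,
    LinearIsometry.toSpanSingleton_apply, one_smul]
  rfl

theorem Column.adjoint_embed_apply [DecidableEq ι] (e : Λ' ↪ Λ) (v : Column ι Λ) (p : ι × Λ') :
    ((embed e).toContinuousLinearMap†) v p = v (p.1, e p.2) := by
  rw [← inner_basisVec_left, ContinuousLinearMap.adjoint_inner_right,
    LinearIsometry.coe_toContinuousLinearMap, embed_basisVec, inner_basisVec_left]

theorem Column.embed_apply [DecidableEq ι] (e : Λ' ↪ Λ) (v : Column ι Λ') (p : ι × Λ') :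
    embed e v (p.1, e p.2) = v p := by
  rw [← adjoint_embed_apply]
  exact congrArg (fun w : Column ι Λ' => w p)
    (DFunLike.congr_fun (embed e).adjoint_comp_self v)

theorem Column.embed_apply_of_notMem_range [DecidableEq ι] (e : Λ' ↪ Λ) (v : Column ι Λ')
    (q : ι × Λ) (hq : q.2 ∉ Set.range e) : embed e v q = 0 := by
  have orthogonal : ((embed e).toContinuousLinearMap†) (basisVec q) = 0 := by
    refine lp.ext (funext fun p => ?_)
    rw [adjoint_embed_apply, basisVec_apply, if_neg]
    · rfl
    · rintro rfl
      exact hq ⟨p.2, rfl⟩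
  rw [← inner_basisVec_left, ← LinearIsometry.coe_toContinuousLinearMap,
    ← ContinuousLinearMap.adjoint_inner_left, orthogonal, inner_zero_left]

theorem orthonormal_single_expBasis [DecidableEq ι] (Λ : Set (Fin k → ℝ)) :
    Orthonormal ℂ fun q : ι × Λ =>
      lp.single (E := fun _ : ι => Besicovitch k) 2 q.1 (expBasis k q.2) := by
  refine orthonormal_iff_ite.2 fun p q => ?_
  rw [lp.inner_single_left, lp.single_apply, Pi.single_apply]
  split_ifs with hpos hpq hpq
  · rw [hpq, orthonormal_iff_ite.1 (expBasis k).orthonormal, if_pos rfl]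
  · rw [(expBasis k).orthonormal.inner_eq_zero fun h => hpq (Prod.ext hpos (Subtype.ext h))]
  · exact absurd (congrArg Prod.fst hpq) hpos
  · exact inner_zero_right _

/-- The `j`-th component of an element of `(B^k_Λ)^ι`, as an element of `B^k`. -/
def component [DecidableEq ι] (Λ : Set (Fin k → ℝ)) (j : ι) :
    Column ι Λ →L[ℂ] Besicovitch k :=
  (lp.evalCLM ℂ (fun _ : ι => Besicovitch k) 2 j).comp
    ((orthonormal_single_expBasis Λ).orthogonalFamily.linearIsometry).toContinuousLinearMap

theorem component_basisVec [DecidableEq ι] (j : ι) (q : ι × Λ) :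
    component Λ j (Column.basisVec q) = if j = q.1 then expBasis k q.2 else 0 := by
  rw [component, ContinuousLinearMap.comp_apply, LinearIsometry.coe_toContinuousLinearMap,
    OrthogonalFamily.linearIsometry_apply_single, LinearIsometry.toSpanSingleton_apply, one_smul]
  exact Pi.single_apply _ _ _

theorem norm_component_le [DecidableEq ι] (Λ : Set (Fin k → ℝ)) (j : ι) :
    ‖component Λ j‖ ≤ 1 := by
  refine ContinuousLinearMap.opNorm_le_bound _ zero_le_one fun v => ?_
  rw [one_mul, component, ContinuousLinearMap.comp_apply]
  exact (lp.norm_apply_le_norm two_ne_zero _ j).trans_eq (LinearIsometry.norm_map _ _)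

variable [Fintype ι] [Fintype κ] [DecidableEq ι] [DecidableEq κ]

/-- The Toeplitz operator `φ ↦ Π_Λ (F φ)` from `(B^k_Λ)^κ` to `(B^k_Λ)^ι`. -/
def toeplitz (Λ : Set (Fin k → ℝ)) : Matrix ι κ (AP k) →ₗ[ℂ] Column κ Λ →L[ℂ] Column ι Λ where
  toFun F := ∑ i, ∑ j, (component Λ i)† ∘L mulOp (F i j) ∘L component Λ j
  map_add' F G := by
    simp only [Matrix.add_apply, map_add, ContinuousLinearMap.add_comp,
      ContinuousLinearMap.comp_add, Finset.sum_add_distrib]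
  map_smul' c F := by
    simp only [Matrix.smul_apply, map_smul, ContinuousLinearMap.smul_comp,
      ContinuousLinearMap.comp_smul, Finset.smul_sum, RingHom.id_apply]

theorem toeplitz_apply (F : Matrix ι κ (AP k)) : toeplitz Λ F =
    ∑ i, ∑ j, (component Λ i)† ∘L mulOp (F i j) ∘L component Λ j := rfl

theorem norm_toeplitz_le (Λ : Set (Fin k → ℝ)) (F : Matrix ι κ (AP k)) :
    ‖toeplitz Λ F‖ ≤ ∑ i, ∑ j, ‖F i j‖ := by
  refine norm_sum_le_of_le _ fun i _ => norm_sum_le_of_le _ fun j _ => ?_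
  calc ‖(component Λ i)† ∘L mulOp (F i j) ∘L component Λ j‖
      ≤ ‖(component Λ i)†‖ * (‖mulOp (F i j)‖ * ‖component Λ j‖) :=
        (ContinuousLinearMap.opNorm_comp_le _ _).trans
          (mul_le_mul_of_nonneg_left (ContinuousLinearMap.opNorm_comp_le _ _) (norm_nonneg _))
    _ ≤ 1 * (‖F i j‖ * 1) := by
        rw [LinearIsometryEquiv.norm_map]
        gcongr
        exacts [norm_component_le Λ i, NonUnitalStarAlgHom.norm_apply_le mulOp _,
          norm_component_le Λ j]
    _ = ‖F i j‖ := by rw [one_mul, mul_one]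

theorem toeplitz_basisVec_apply (F : Matrix ι κ (AP k)) (p : ι × Λ) (q : κ × Λ) :
    toeplitz Λ F (Column.basisVec q) p = coeff (p.2 - q.2 : Fin k → ℝ) (F p.1 q.1) := by
  rw [← Column.inner_basisVec_left, toeplitz_apply]
  simp only [_root_.sum_apply, ContinuousLinearMap.comp_apply, inner_sum,
    ContinuousLinearMap.adjoint_inner_right, component_basisVec]
  rw [Finset.sum_eq_single_of_mem p.1 (Finset.mem_univ _) fun i _ hi => by
      simp only [if_neg hi, inner_zero_left, Finset.sum_const_zero],
    Finset.sum_eq_single_of_mem q.1 (Finset.mem_univ _) fun j _ hj => by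
      simp only [if_neg hj, map_zero, inner_zero_right],
    if_pos rfl, if_pos rfl, inner_expBasis_mulOp_expBasis]

theorem eq_toeplitz_iff {F : Matrix ι κ (AP k)} {T : Column κ Λ →L[ℂ] Column ι Λ} :
    T = toeplitz Λ F ↔
      ∀ p q, T (Column.basisVec q) p = coeff (p.2 - q.2 : Fin k → ℝ) (F p.1 q.1) := by
  refine ⟨?_, fun h => Column.ext_entries fun p q =>
    (h p q).trans (toeplitz_basisVec_apply F p q).symm⟩
  rintro rfl p q
  exact toeplitz_basisVec_apply F p q

theorem toeplitz_one (Λ : Set (Fin k → ℝ)) : toeplitz Λ (1 : Matrix ι ι (AP k)) = 1 := by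
  refine (eq_toeplitz_iff.2 fun p q => ?_).symm
  rw [one_apply_eq_self, Column.basisVec_apply, Matrix.one_apply, apply_ite (coeff _),
    map_zero, ← exp_zero, coeff_exp]
  simp only [Prod.ext_iff, eq_comm (a := (0 : Fin k → ℝ)), sub_eq_zero,
    Subtype.ext_iff, ite_and]

theorem adjoint_toeplitz (F : Matrix ι κ (AP k)) : (toeplitz Λ F)† = toeplitz Λ Fᴴ := by
  refine eq_toeplitz_iff.2 fun p q => ?_
  rw [Column.adjoint_basisVec_apply, toeplitz_basisVec_apply, Matrix.conjTranspose_apply,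
    coeff_star, neg_sub]

theorem toeplitz_apply_eq_coeff_mulVec {F : Matrix ι κ (AP k)} {v : Column κ Λ} {f : κ → AP k}
    (hv : ∀ q, v q = coeff (q.2 : Fin k → ℝ) (f q.1)) (hf : ∀ j, ∀ x ∉ Λ, coeff x (f j) = 0)
    (p : ι × Λ) : toeplitz Λ F v p = coeff (p.2 : Fin k → ℝ) ((F *ᵥ f) p.1) := by
  have parseval : HasSum (fun q : κ × Λ => coeff (p.2 - q.2 : Fin k → ℝ) (F p.1 q.1) *
      coeff (q.2 : Fin k → ℝ) (f q.1)) (toeplitz Λ F v p) := by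
    have entry (q : κ × Λ) : inner ℂ (((toeplitz Λ F)†) (Column.basisVec p) q) (v q) =
        coeff (p.2 - q.2 : Fin k → ℝ) (F p.1 q.1) *
          coeff (q.2 : Fin k → ℝ) (f q.1) := by
      rw [Column.adjoint_basisVec_apply, toeplitz_basisVec_apply, hv, RCLike.inner_apply,
        starRingEnd_apply, star_star, mul_comm]
    simpa only [entry, ContinuousLinearMap.adjoint_inner_left, Column.inner_basisVec_left] using
      lp.hasSum_inner (𝕜 := ℂ) (((toeplitz Λ F)†) (Column.basisVec p)) v
  have component_sum (j : κ) : HasSum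
      (fun x : Λ => coeff (p.2 - x : Fin k → ℝ) (F p.1 j) * coeff (x : Fin k → ℝ) (f j))
      (coeff (p.2 : Fin k → ℝ) (F p.1 j * f j)) := by
    refine (hasSum_subtype_iff_of_support_subset fun x hx => ?_).2
      (hasSum_coeff_mul (F p.1 j) (f j) p.2)
    by_contra hxΛ
    exact hx (mul_eq_zero_of_right _ (hf j x hxΛ))
  rw [Matrix.mulVec, dotProduct, map_sum]
  exact (parseval.prod_fiberwise component_sum).unique (hasSum_fintype _)

theorem toeplitz_mul_of_right {μ : Type*} [Fintype μ] [DecidableEq μ] (F : Matrix ι κ (AP k))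
    {G : Matrix κ μ (AP k)}
    (hG : ∀ i j, ∀ x ∈ Λ, ∀ y ∉ Λ, coeff (y - x) (G i j) = 0) :
    toeplitz Λ (F * G) = toeplitz Λ F ∘L toeplitz Λ G := by
  refine (eq_toeplitz_iff.2 fun p q => ?_).symm
  rw [ContinuousLinearMap.comp_apply,
    toeplitz_apply_eq_coeff_mulVec (f := fun j => exp (q.2 : Fin k → ℝ) * G j q.1)
      (fun r => by rw [toeplitz_basisVec_apply, coeff_exp_mul])
      (fun j x hx => by rw [coeff_exp_mul]; exact hG j q.1 q.2 q.2.2 x hx),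
    ← coeff_exp_mul]
  congr 1
  simp only [Matrix.mulVec, dotProduct, Matrix.mul_apply, Finset.mul_sum, mul_left_comm]

theorem toeplitz_mul_of_left {μ : Type*} [Fintype μ] [DecidableEq μ] {F : Matrix ι κ (AP k)}
    (G : Matrix κ μ (AP k)) (hF : ∀ i j, ∀ x ∉ Λ, ∀ y ∈ Λ, coeff (y - x) (F i j) = 0) :
    toeplitz Λ (F * G) = toeplitz Λ F ∘L toeplitz Λ G := by
  have h := toeplitz_mul_of_right (Λ := Λ) Gᴴ (G := Fᴴ) fun i j x hx y hy => by
    rw [Matrix.conjTranspose_apply, coeff_star, neg_sub, hF j i y hy x hx, star_zero]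
  rw [← Matrix.conjTranspose_mul, ← adjoint_toeplitz, ← adjoint_toeplitz, ← adjoint_toeplitz,
    ← ContinuousLinearMap.adjoint_comp] at h
  exact (ContinuousLinearMap.adjoint (𝕜 := ℂ)).injective h

theorem adjoint_embed_comp_toeplitz_comp_embed {e : Λ' ↪ Λ}
    (he : ∀ x y, (e x : Fin k → ℝ) - (e y : Fin k → ℝ) = x - y) (F : Matrix ι κ (AP k)) :
    ((Column.embed e).toContinuousLinearMap†) ∘L toeplitz Λ F ∘L
      (Column.embed e).toContinuousLinearMap = toeplitz Λ' F := by
  refine eq_toeplitz_iff.2 fun p q => ?_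
  rw [ContinuousLinearMap.comp_apply, ContinuousLinearMap.comp_apply,
    LinearIsometry.coe_toContinuousLinearMap, Column.adjoint_embed_apply, Column.embed_basisVec,
    toeplitz_basisVec_apply, he]

theorem toeplitz_comp_embed (h : Λ' ⊆ Λ) {F : Matrix ι κ (AP k)}
    (hF : ∀ i j, ∀ x ∈ Λ', ∀ y ∈ Λ, y ∉ Λ' → coeff (y - x) (F i j) = 0) :
    toeplitz Λ F ∘L (Column.embed (Set.embeddingOfSubset Λ' Λ h)).toContinuousLinearMap =
      (Column.embed (Set.embeddingOfSubset Λ' Λ h)).toContinuousLinearMap ∘L toeplitz Λ' F := by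
  refine Column.ext_entries fun p q => ?_
  rw [ContinuousLinearMap.comp_apply, ContinuousLinearMap.comp_apply,
    LinearIsometry.coe_toContinuousLinearMap, LinearIsometry.coe_toContinuousLinearMap,
    Column.embed_basisVec, toeplitz_basisVec_apply]
  by_cases hp : (p.2 : Fin k → ℝ) ∈ Λ'
  · exact ((Column.embed_apply (Set.embeddingOfSubset Λ' Λ h) _ (p.1, ⟨p.2, hp⟩)).trans
      (toeplitz_basisVec_apply F _ q)).symm
  · rw [Column.embed_apply_of_notMem_range _ _ p]
    · exact hF p.1 q.1 q.2 q.2.2 p.2 p.2.2 hp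
    · rintro ⟨x, hx⟩
      exact hp (hx ▸ x.2)

theorem isUnit_toeplitz_of_subset (h : Λ' ⊆ Λ) {F : Matrix ι ι (AP k)}
    (hF : ∀ i j, ∀ x ∈ Λ', ∀ y ∈ Λ, y ∉ Λ' →
      coeff (y - x) (F i j) = 0 ∧ coeff (x - y) (F i j) = 0)
    (hT : IsUnit (toeplitz Λ F)) : IsUnit (toeplitz Λ' F) := by
  obtain ⟨V, hTV, hVT⟩ := isUnit_iff_exists.1 hT
  let J : Column ι Λ' →L[ℂ] Column ι Λ :=
    (Column.embed (Set.embeddingOfSubset Λ' Λ h)).toContinuousLinearMap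
  have adjoint_comp_self : J† ∘L J = 1 := LinearIsometry.adjoint_comp_self _
  have comp_embed : toeplitz Λ F ∘L J = J ∘L toeplitz Λ' F :=
    toeplitz_comp_embed h fun i j x hx y hy hy' => (hF i j x hx y hy hy').1
  have adjoint_comp : J† ∘L toeplitz Λ F = toeplitz Λ' F ∘L J† := by
    have hstar := toeplitz_comp_embed h (F := Fᴴ) fun i j x hx y hy hy' => by
      rw [Matrix.conjTranspose_apply, coeff_star, neg_sub, (hF j i x hx y hy hy').2, star_zero]
    rw [← adjoint_toeplitz, ← adjoint_toeplitz] at hstar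
    simpa only [ContinuousLinearMap.adjoint_comp, ContinuousLinearMap.adjoint_adjoint] using
      congrArg ContinuousLinearMap.adjoint hstar
  refine isUnit_iff_exists.2 ⟨J† ∘L V ∘L J, ?_, ?_⟩
  · calc toeplitz Λ' F * (J† ∘L V ∘L J) = (toeplitz Λ' F ∘L J†) ∘L V ∘L J := rfl
      _ = J† ∘L (toeplitz Λ F * V) ∘L J := by rw [← adjoint_comp]; rfl
      _ = 1 := by rw [hTV]; exact adjoint_comp_self
  · calc (J† ∘L V ∘L J) * toeplitz Λ' F = J† ∘L V ∘L (J ∘L toeplitz Λ' F) := rfl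
      _ = J† ∘L (V * toeplitz Λ F) ∘L J := by rw [← comp_embed]; rfl
      _ = 1 := by rw [hVT]; exact adjoint_comp_self

end Toeplitz

end AP

section MaximalLeftIdeals

variable {A : Type*} [NormedRing A] [NormedAlgebra ℂ A]

theorem eq_of_algebraMap_sub_mem {J : Ideal A} (hJ : J ≠ ⊤) {c d : ℂ}
    (h : algebraMap ℂ A c - algebraMap ℂ A d ∈ J) : c = d := by
  by_contra hcd
  rw [← map_sub] at h
  exact hJ (Ideal.eq_top_of_isUnit_mem _ h ((sub_ne_zero.2 hcd).isUnit.map _))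

variable [CompleteSpace A]

theorem exists_sub_algebraMap_mem_of_commute {J : Ideal A} (hJ : J.IsMaximal) {x : A}
    (hx : ∀ a, Commute x a) : ∃ c : ℂ, x - algebraMap ℂ A c ∈ J := by
  have : IsSimpleModule A (A ⧸ J) := isSimpleModule_iff_isCoatom.2 hJ.out
  have : Nontrivial (A ⧸ J) := IsSimpleModule.nontrivial A _
  let act (y : A) : (A ⧸ J) →L[ℂ] (A ⧸ J) :=
    ⟨Algebra.lsmul ℂ ℂ (A ⧸ J) y, continuous_const_smul y⟩
  have act_apply (y : A) (m : A ⧸ J) : act y m = y • m := rfl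
  obtain ⟨c, hc⟩ := spectrum.nonempty (act x)
  have hact : algebraMap ℂ _ c - act x = act (algebraMap ℂ A c - x) := by
    ext m
    simp [act_apply, sub_smul, Algebra.algebraMap_eq_smul_one]
  have hcx : ∀ a, Commute (algebraMap ℂ A c - x) a := fun a =>
    (Algebra.commute_algebraMap_left c a).sub_left (hx a)
  let φ : (A ⧸ J) →ₗ[A] (A ⧸ J) :=
    { act (algebraMap ℂ A c - x) with
      map_smul' := fun a m => by
        simp only [AddHom.toFun_eq_coe, LinearMap.coe_toAddHom, ContinuousLinearMap.coe_coe,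
          act_apply, smul_smul, (hcx a).eq, RingHom.id_apply] }
  refine ⟨c, φ.bijective_or_eq_zero.elim (fun hbij => absurd ?_ hc) fun hφ => ?_⟩
  · rw [spectrum.mem_resolventSet_iff, hact]
    exact ⟨ContinuousLinearEquiv.toUnit (.ofBijective _ (LinearMap.ker_eq_bot.2 hbij.1)
      (LinearMap.range_eq_top.2 hbij.2)), rfl⟩
  · have h1 : Submodule.Quotient.mk (p := J) ((algebraMap ℂ A c - x) • (1 : A)) = 0 :=
      DFunLike.congr_fun hφ (Submodule.Quotient.mk 1)
    rw [Submodule.Quotient.mk_eq_zero, smul_eq_mul, mul_one] at h1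
    simpa using J.neg_mem h1

variable {Γ : Type*} [AddCommGroup Γ] {s : AddChar Γ A} {C : ℝ}

theorem exists_addChar_sub_mem_of_isMaximal (hs : ∀ g a, Commute (s g) a) {J : Ideal A}
    (hJ : J.IsMaximal) : ∃ c : AddChar Γ ℂ, ∀ g, s g - algebraMap ℂ A (c g) ∈ J := by
  choose c hc using fun g => exists_sub_algebraMap_mem_of_commute hJ (hs g)
  refine ⟨⟨c, ?_, fun g h => ?_⟩, hc⟩ <;> refine (eq_of_algebraMap_sub_mem hJ.ne_top ?_).symm
  · simpa using hc 0
  · have hsplit : algebraMap ℂ A (c g * c h) - algebraMap ℂ A (c (g + h)) =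
        (s (g + h) - algebraMap ℂ A (c (g + h))) - s g * (s h - algebraMap ℂ A (c h)) -
          algebraMap ℂ A (c h) * (s g - algebraMap ℂ A (c g)) := by
      rw [s.map_add_eq_mul, mul_comm (c g), map_mul, mul_sub, mul_sub,
        Algebra.commutes (c h) (s g)]
      abel
    rw [hsplit]
    exact J.sub_mem (J.sub_mem (hc _) (J.mul_mem_left _ (hc _))) (J.mul_mem_left _ (hc _))

theorem norm_addChar_eq_one_of_bounded {c : AddChar Γ ℂ} (hc : ∀ g, ‖c g‖ ≤ C) (g : Γ) :
    ‖c g‖ = 1 := by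
  have hle : ∀ g, ‖c g‖ ≤ 1 := by
    intro g
    by_contra! hg
    obtain ⟨n, hn⟩ := pow_unbounded_of_one_lt C hg
    have := hc (n • g)
    rw [c.map_nsmul_eq_pow, norm_pow] at this
    exact this.not_gt hn
  refine (hle g).antisymm ?_
  calc (1 : ℝ) = ‖c g‖ * ‖c (-g)‖ := by
        rw [← norm_mul, ← c.map_add_eq_mul, add_neg_cancel, c.map_zero_eq_one, norm_one]
    _ ≤ ‖c g‖ * 1 := by gcongr; exact hle _
    _ = ‖c g‖ := mul_one _

theorem exists_character_sub_mem_of_isMaximal (hs : ∀ g a, Commute (s g) a)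
    (hC : ∀ g, ‖s g‖ ≤ C) {J : Ideal A} (hJ : J.IsMaximal) :
    ∃ χ : AddChar Γ Circle, ∀ g, s g - algebraMap ℂ A (χ g) ∈ J := by
  obtain ⟨c, hc⟩ := exists_addChar_sub_mem_of_isMaximal hs hJ
  have hmem : ∀ g, c g ∈ spectrum ℂ (s g) := fun g hu =>
    hJ.ne_top (Ideal.eq_top_of_isUnit_mem _ (by simpa using J.neg_mem (hc g)) hu)
  have hbound : ∀ g, ‖c g‖ ≤ C * ‖(1 : A)‖ := fun g =>
    (spectrum.norm_le_norm_mul_of_mem (hmem g)).trans (by gcongr; exact hC g)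
  exact ⟨⟨fun g => ⟨c g, mem_sphere_zero_iff_norm.2 (norm_addChar_eq_one_of_bounded hbound g)⟩,
    Subtype.ext c.map_zero_eq_one, fun g h => Subtype.ext (c.map_add_eq_mul g h)⟩, hc⟩

theorem summable_circle_smul {E : Type*} [NormedAddCommGroup E] [NormedSpace ℂ E]
    [CompleteSpace E] {ι : Type*} {a : ι → E} (ha : Summable fun i => ‖a i‖) (z : ι → Circle) :
    Summable fun i => (z i : ℂ) • a i :=
  .of_norm (by simpa only [norm_smul, Circle.norm_coe, one_mul] using ha)

theorem exists_left_inverse_of_characters (hs : ∀ g a, Commute (s g) a) (hC : ∀ g, ‖s g‖ ≤ C)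
    {a : Γ → A} (ha : Summable fun g => ‖a g‖)
    (hinv : ∀ χ : AddChar Γ Circle, ∃ u, u * ∑' g, (χ g : ℂ) • a g = 1) :
    ∃ r, r * ∑' g, a g * s g = 1 := by
  by_contra! hno
  have hne : Ideal.span {∑' g, a g * s g} ≠ ⊤ := fun h =>
    (Submodule.mem_span_singleton.1 ((Ideal.eq_top_iff_one _).1 h)).elim hno
  obtain ⟨J, hJ, hle⟩ := Ideal.exists_le_maximal _ hne
  obtain ⟨χ, hχ⟩ := exists_character_sub_mem_of_isMaximal hs hC hJ
  obtain ⟨u, hu⟩ := hinv χ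
  have hsummable : Summable fun g => a g * s g :=
    .of_norm_bounded (ha.mul_right C) fun g => (norm_mul_le _ _).trans (by gcongr; exact hC g)
  have hdiff : ∑' g, a g * s g - ∑' g, (χ g : ℂ) • a g ∈ J := by
    have hclosed : IsClosed (J : Set A) := Ideal.IsMaximal.isClosed
    rw [← hsummable.tsum_sub (summable_circle_smul ha χ)]
    refine hclosed.mem_of_tendsto (hsummable.sub (summable_circle_smul ha χ)).hasSum
      (Eventually.of_forall fun t => J.sum_mem fun g _ => ?_)
    rw [Algebra.smul_def, Algebra.commutes, ← mul_sub]
    exact J.mul_mem_left _ (hχ g)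
  have hmem : ∑' g, (χ g : ℂ) • a g ∈ J := by
    simpa using J.sub_mem (hle (Ideal.mem_span_singleton_self _)) hdiff
  exact hJ.ne_top ((Ideal.eq_top_iff_one _).2 (hu ▸ J.mul_mem_left u hmem))

end MaximalLeftIdeals

namespace BochnerPhillips

open AddMonoidAlgebra UniformSpace

variable {Γ : Type*} {B : Type*} [NormedRing B] [NormedAlgebra ℂ B]

/-- The inclusion of the finitely supported functions in `ℓ¹(Γ; B)`. The norm that it induces
on the group algebra of `Γ` over `B` is the one used throughout. -/
def toL1 : AddMonoidAlgebra B Γ →ₗ[ℂ] lp (fun _ : Γ => B) 1 where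
  toFun f := ⟨fun g => f.coeff g, memℓp_gen (summable_of_hasFiniteSupport
    (f.coeff.hasFiniteSupport.subset fun g => by simp))⟩
  map_add' _ _ := rfl
  map_smul' _ _ := rfl

theorem toL1_apply (f : AddMonoidAlgebra B Γ) (g : Γ) : toL1 f g = f.coeff g := rfl

theorem toL1_injective : Function.Injective (toL1 : AddMonoidAlgebra B Γ →ₗ[ℂ] _) :=
  fun _ _ h => coeff_injective (DFunLike.ext _ _ fun g => congrArg (fun v => v g) h)

theorem toL1_single [DecidableEq Γ] (g : Γ) (b : B) : toL1 (single g b) = lp.single 1 g b := by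
  ext h
  rw [toL1_apply, coeff_single, Finsupp.single_apply, lp.single_apply, Pi.single_apply]
  simp only [eq_comm]

scoped instance : NormedAddCommGroup (AddMonoidAlgebra B Γ) :=
  .induced _ _ toL1 toL1_injective

theorem isometry_toL1 : Isometry (toL1 : AddMonoidAlgebra B Γ →ₗ[ℂ] _) :=
  AddMonoidHomClass.isometry_of_norm _ fun _ => rfl

theorem norm_eq_sum (f : AddMonoidAlgebra B Γ) : ‖f‖ = f.coeff.sum fun _ b => ‖b‖ := by
  change ‖toL1 f‖ = _
  rw [lp.norm_eq_tsum_rpow (by simp), tsum_eq_sum (s := f.coeff.support)]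
  · simp [toL1_apply, Finsupp.sum]
  · intro g hg
    simpa [toL1_apply] using hg

theorem norm_single (g : Γ) (b : B) : ‖single g b‖ = ‖b‖ := by
  rw [norm_eq_sum, coeff_single, Finsupp.sum_single_index (by exact norm_zero)]

variable [AddCommGroup Γ]

theorem norm_mul_le_mul (f h : AddMonoidAlgebra B Γ) : ‖f * h‖ ≤ ‖f‖ * ‖h‖ := by
  rw [mul_def, norm_eq_sum f, norm_eq_sum h]
  simp only [Finsupp.sum, Finset.sum_mul_sum]
  refine (norm_sum_le _ _).trans (Finset.sum_le_sum fun g _ => ?_)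
  refine (norm_sum_le _ _).trans (Finset.sum_le_sum fun g' _ => ?_)
  rw [norm_single]
  exact norm_mul_le _ _

scoped instance : NormedRing (AddMonoidAlgebra B Γ) where
  dist_eq := NormedAddGroup.dist_eq
  norm_mul_le := norm_mul_le_mul

scoped instance : NormedAlgebra ℂ (AddMonoidAlgebra B Γ) where
  norm_smul_le c f := (congrArg norm (toL1.map_smul c f)).trans_le (norm_smul_le c (toL1 f))

scoped instance : NormedAlgebra ℂ (Completion (AddMonoidAlgebra B Γ)) where
  norm_smul_le := norm_smul_le

/-- The monomials `b g` of the completed group algebra. -/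
def monomial (g : Γ) : B →L[ℂ] Completion (AddMonoidAlgebra B Γ) :=
  LinearMap.mkContinuous
    { toFun := fun b => (single g b : AddMonoidAlgebra B Γ)
      map_add' := fun b c => by rw [single_add, Completion.coe_add]
      map_smul' := fun c b => by rw [← smul_single, Completion.coe_smul, RingHom.id_apply] }
    1 fun b => by simp [norm_single]

/-- The group elements, as elements of the completed group algebra. -/
def groupElement : AddChar Γ (Completion (AddMonoidAlgebra B Γ)) where
  toFun g := (single g 1 : AddMonoidAlgebra B Γ)
  map_zero_eq_one' := rfl
  map_add_eq_mul' g h := by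
    rw [← Completion.coe_mul, single_mul_single, mul_one]

theorem monomial_apply (g : Γ) (b : B) :
    monomial g b = (single g b : AddMonoidAlgebra B Γ) := rfl

theorem groupElement_apply (g : Γ) :
    (groupElement g : Completion (AddMonoidAlgebra B Γ)) = monomial g 1 := rfl

theorem monomial_mul_groupElement (g h : Γ) (b : B) :
    monomial g b * groupElement h = monomial (g + h) b := by
  rw [groupElement_apply, monomial_apply, monomial_apply, ← Completion.coe_mul,
    single_mul_single, mul_one, monomial_apply]

theorem commute_groupElement (g : Γ) (x : Completion (AddMonoidAlgebra B Γ)) :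
    Commute (groupElement g) x := by
  induction x using Completion.induction_on with
  | hp => exact isClosed_eq (continuous_const_mul _) (continuous_mul_const _)
  | ih f =>
    exact (single_commute (fun h => AddCommute.all g h) (Commute.one_left) f).map
      (Completion.coeRingHom (α := AddMonoidAlgebra B Γ))

theorem norm_groupElement (g : Γ) :
    ‖(groupElement g : Completion (AddMonoidAlgebra B Γ))‖ = ‖(1 : B)‖ :=
  (Completion.norm_coe _).trans (norm_single g 1)

theorem norm_monomial (g : Γ) (b : B) : ‖monomial g b‖ = ‖b‖ :=
  (Completion.norm_coe _).trans (norm_single g b)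

/-- The finite sum `∑ χ(g) f_g` attached to a unitary character `χ`. -/
def finEval (χ : AddChar Γ Circle) : AddMonoidAlgebra B Γ →ₐ[ℂ] B :=
  liftNCAlgHom (AlgHom.id ℂ B)
    ((algebraMap ℂ B : ℂ →* B).comp (Circle.coeHom.comp χ.toMonoidHom))
    fun _ _ => Algebra.commute_algebraMap_right _ _

theorem finEval_single (χ : AddChar Γ Circle) (g : Γ) (b : B) :
    finEval χ (single g b) = (χ g : ℂ) • b := by
  rw [Algebra.smul_def, Algebra.commutes]
  exact liftNC_single _ _ _ _

theorem norm_finEval_le (χ : AddChar Γ Circle) (f : AddMonoidAlgebra B Γ) :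
    ‖finEval χ f‖ ≤ ‖f‖ := by
  rw [norm_eq_sum]
  nth_rw 1 [← sum_coeff_single f]
  rw [Finsupp.sum, map_sum]
  refine (norm_sum_le _ _).trans_eq ?_
  simp only [finEval_single, norm_smul, Circle.norm_coe, one_mul, Finsupp.sum]

theorem uniformContinuous_finEval (χ : AddChar Γ Circle) :
    UniformContinuous (finEval χ : AddMonoidAlgebra B Γ → B) :=
  AddMonoidHomClass.uniformContinuous_of_bound (finEval χ) 1 fun f => by
    simpa using norm_finEval_le χ f

variable [CompleteSpace B]

/-- The coefficients of an element of the completed group algebra. -/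
def coeffs : Completion (AddMonoidAlgebra B Γ) →+ lp (fun _ : Γ => B) 1 :=
  (toL1 : AddMonoidAlgebra B Γ →ₗ[ℂ] _).toAddMonoidHom.extension isometry_toL1.continuous

theorem coeffs_coe (f : AddMonoidAlgebra B Γ) : coeffs (f : Completion _) = toL1 f :=
  AddMonoidHom.extension_coe _ _ f

theorem hasSum_monomial_coeffs (x : Completion (AddMonoidAlgebra B Γ)) :
    HasSum (fun g => monomial g (coeffs x g)) x := by
  classical
  have hcoeffs : Isometry (coeffs : Completion (AddMonoidAlgebra B Γ) →+ _) :=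
    isometry_toL1.completion_extension
  refine (hcoeffs.isUniformInducing.isInducing.hasSum_iff _ _).1 ?_
  convert lp.hasSum_single ENNReal.one_ne_top (coeffs x) using 2 with g
  exact (coeffs_coe _).trans (toL1_single g _)

/-- The sum `∑ χ(g) x_g` attached to a unitary character `χ`, as a homomorphism. -/
def eval (χ : AddChar Γ Circle) : Completion (AddMonoidAlgebra B Γ) →+* B :=
  IsDenseInducing.extendRingHom (i := Completion.coeRingHom (α := AddMonoidAlgebra B Γ))
    (f := (finEval χ).toRingHom)
    (Completion.isUniformInducing_coe _) Completion.denseRange_coe (uniformContinuous_finEval χ)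

theorem eval_coe (χ : AddChar Γ Circle) (f : AddMonoidAlgebra B Γ) :
    eval χ (f : Completion _) = finEval χ f :=
  (Completion.isDenseInducing_coe).extend_eq (uniformContinuous_finEval χ).continuous f

theorem continuous_eval (χ : AddChar Γ Circle) :
    Continuous (eval χ : Completion (AddMonoidAlgebra B Γ) →+* B) :=
  (uniformContinuous_uniformly_extend (Completion.isUniformInducing_coe _)
    Completion.denseRange_coe (uniformContinuous_finEval χ)).continuous

theorem eval_monomial (χ : AddChar Γ Circle) (g : Γ) (b : B) :
    eval χ (monomial g b) = (χ g : ℂ) • b := by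
  rw [monomial_apply, eval_coe, finEval_single]

theorem hasSum_eval (χ : AddChar Γ Circle) (x : Completion (AddMonoidAlgebra B Γ)) :
    HasSum (fun g => (χ g : ℂ) • coeffs x g) (eval χ x) := by
  simpa only [Function.comp_def, eval_monomial] using
    (hasSum_monomial_coeffs x).map (eval χ) (continuous_eval χ)

theorem summable_norm_coeffs (x : Completion (AddMonoidAlgebra B Γ)) :
    Summable fun g => ‖coeffs x g‖ := by
  simpa using (lp.memℓp (coeffs x)).summable (by simp)

/-- The **Bochner-Phillips theorem**. -/
theorem exists_summable_left_inverse {D : Γ → B} (hD : Summable fun g => ‖D g‖)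
    (hinv : ∀ χ : AddChar Γ Circle, ∃ u, u * ∑' g, (χ g : ℂ) • D g = 1) :
    ∃ E : Γ → B, (Summable fun g => ‖E g‖) ∧ ∀ χ : AddChar Γ Circle,
      (∑' g, (χ g : ℂ) • E g) * ∑' g, (χ g : ℂ) • D g = 1 := by
  have hmon : Summable fun g => ‖monomial (0 : Γ) (D g)‖ := by
    simpa only [norm_monomial] using hD
  obtain ⟨r, hr⟩ := exists_left_inverse_of_characters commute_groupElement
    (fun g => (norm_groupElement g).le) hmon fun χ => by
      obtain ⟨u, hu⟩ := hinv χ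
      have hmap : ∑' g, (χ g : ℂ) • monomial (0 : Γ) (D g) =
          monomial 0 (∑' g, (χ g : ℂ) • D g) := HasSum.tsum_eq (by
        simpa only [map_smul] using (summable_circle_smul hD χ).hasSum.mapL (monomial (0 : Γ)))
      refine ⟨monomial 0 u, ?_⟩
      rw [hmap, monomial_apply, monomial_apply, ← Completion.coe_mul, single_mul_single, hu,
        add_zero]
      rfl
  simp only [monomial_mul_groupElement, zero_add] at hr
  have hsum : Summable fun g => monomial g (D g) := .of_norm (by
    simpa only [norm_monomial] using hD)
  refine ⟨coeffs r, summable_norm_coeffs r, fun χ => ?_⟩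
  rw [(hasSum_eval χ r).tsum_eq]
  simp only [← eval_monomial]
  rw [← hsum.map_tsum (eval χ) (continuous_eval χ), ← map_mul, hr, map_one]

end BochnerPhillips

namespace AP

variable {k : ℕ}

section InverseDecay

variable {Λ : Set (Fin k → ℝ)} {ι : Type*}

/-- The unitary operator `e_g ↦ χ(g) e_g` on `(B^k_Λ)^ι`. -/
def modulation (χ : AddChar (Fin k → ℝ) Circle) : Column ι Λ ≃ₗᵢ[ℂ] Column ι Λ where
  toFun v := ⟨fun p => (χ p.2 : ℂ) * v p, (memℓp_gen_iff (by simp)).2 <| by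
    simpa only [norm_mul, Circle.norm_coe, one_mul] using (lp.memℓp v).summable (by simp)⟩
  invFun v := ⟨fun p => ((χ p.2)⁻¹ : Circle) * v p, (memℓp_gen_iff (by simp)).2 <| by
    simpa only [norm_mul, Circle.norm_coe, one_mul] using (lp.memℓp v).summable (by simp)⟩
  left_inv v := lp.ext <| funext fun p => by
    simp only [← mul_assoc, ← Circle.coe_mul, inv_mul_cancel, Circle.coe_one, one_mul]
  right_inv v := lp.ext <| funext fun p => by
    simp only [← mul_assoc, ← Circle.coe_mul, mul_inv_cancel, Circle.coe_one, one_mul]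
  map_add' v w := lp.ext <| funext fun p => mul_add _ _ _
  map_smul' c v := lp.ext <| funext fun p => mul_left_comm _ _ _
  norm_map' v := by
    simp only [lp.norm_eq_tsum_rpow (p := 2) (by simp), LinearEquiv.coe_mk, LinearMap.coe_mk,
      AddHom.coe_mk, norm_mul, Circle.norm_coe, one_mul]

theorem modulation_apply (χ : AddChar (Fin k → ℝ) Circle) (v : Column ι Λ) (p : ι × Λ) :
    modulation χ v p = (χ p.2 : ℂ) * v p := rfl

theorem modulation_symm_basisVec [DecidableEq ι] (χ : AddChar (Fin k → ℝ) Circle) (q : ι × Λ) :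
    (modulation χ).symm (Column.basisVec q) =
      (((χ q.2)⁻¹ : Circle) : ℂ) • (Column.basisVec q : Column ι Λ) := by
  refine lp.ext (funext fun p => ?_)
  change _ * (Column.basisVec q : Column ι Λ) p = _ * (Column.basisVec q : Column ι Λ) p
  rw [Column.basisVec_apply]
  split_ifs with hpq
  · rw [hpq]
  · rw [mul_zero, mul_zero]

theorem norm_basisVec_apply_le [DecidableEq ι] (T : Column ι Λ →L[ℂ] Column ι Λ) (p q : ι × Λ) :
    ‖T (Column.basisVec q) p‖ ≤ ‖T‖ :=
  (lp.norm_apply_le_norm two_ne_zero _ p).trans <| by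
    simpa [lp.norm_single] using T.le_opNorm (Column.basisVec q)

theorem hasSum_basisVec_apply [DecidableEq ι] {σ : Type*} {D : σ → Column ι Λ →L[ℂ] Column ι Λ}
    {T : Column ι Λ →L[ℂ] Column ι Λ} (h : HasSum D T) (p q : ι × Λ) :
    HasSum (fun g => D g (Column.basisVec q) p) (T (Column.basisVec q) p) :=
  (h.mapL (.apply ℂ _ (Column.basisVec q))).mapL (lp.evalCLM ℂ (fun _ : ι × Λ => ℂ) 2 p)

/-- Conjugation of operators on `(B^k_Λ)^ι` by `AP.modulation`. -/
def modulate (χ : AddChar (Fin k → ℝ) Circle) :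
    (Column ι Λ →L[ℂ] Column ι Λ) ≃A[ℂ] (Column ι Λ →L[ℂ] Column ι Λ) :=
  (modulation χ).toContinuousLinearEquiv.conjContinuousAlgEquiv

theorem modulate_basisVec_apply [DecidableEq ι] (χ : AddChar (Fin k → ℝ) Circle)
    (T : Column ι Λ →L[ℂ] Column ι Λ) (p q : ι × Λ) :
    modulate χ T (Column.basisVec q) p =
      (χ ((p.2 : Fin k → ℝ) - (q.2 : Fin k → ℝ)) : ℂ) * T (Column.basisVec q) p := by
  calc modulate χ T (Column.basisVec q) p
      = modulation χ (T ((modulation χ).symm (Column.basisVec q))) p := rfl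
    _ = (χ p.2 : ℂ) * (((χ q.2)⁻¹ : Circle) * T (Column.basisVec q) p) := by
        rw [modulation_symm_basisVec, map_smul, modulation_apply, lp.coeFn_smul, Pi.smul_apply,
          smul_eq_mul]
    _ = _ := by rw [AddChar.map_sub_eq_div, div_eq_mul_inv, Circle.coe_mul, mul_assoc]

/-- The character `g ↦ e_g(x)` of `ℝ^k`. -/
def expChar (x : Fin k → ℝ) : AddChar (Fin k → ℝ) Circle where
  toFun g := Circle.exp (∑ j, g j * x j)
  map_zero_eq_one' := by simp
  map_add_eq_mul' g h := by
    simp only [Pi.add_apply, add_mul, Finset.sum_add_distrib, Circle.exp_add]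

theorem coe_expChar (x g : Fin k → ℝ) : (expChar x g : ℂ) = apExp k g x := by
  rw [apExp_apply, mul_comm]
  exact Circle.coe_exp _

variable [DecidableEq ι]

theorem basisVec_apply_eq_of_modulate {V : Column ι Λ →L[ℂ] Column ι Λ}
    {E : (Fin k → ℝ) → Column ι Λ →L[ℂ] Column ι Λ} (hE : Summable fun g => ‖E g‖)
    (hV : ∀ χ : AddChar (Fin k → ℝ) Circle, modulate χ V = ∑' g, (χ g : ℂ) • E g)
    (p q : ι × Λ) : V (Column.basisVec q) p =
      E ((p.2 : Fin k → ℝ) - (q.2 : Fin k → ℝ)) (Column.basisVec q) p := by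
  set z := (p.2 : Fin k → ℝ) - (q.2 : Fin k → ℝ)
  set a : (Fin k → ℝ) → ℂ := fun g => E g (Column.basisVec q) p
  have ha : Summable fun g => ‖a g‖ :=
    .of_nonneg_of_le (fun g => norm_nonneg _) (fun g => norm_basisVec_apply_le (E g) p q) hE
  have hseries : wienerSeries a = V (Column.basisVec q) p • exp z := by
    refine Subtype.ext (BoundedContinuousFunction.ext fun x => ?_)
    have hx := hasSum_basisVec_apply (summable_circle_smul hE (expChar x)).hasSum p q
    rw [← hV, modulate_basisVec_apply, coe_expChar] at hx
    have hax := ((hasSum_wienerSeries ha).mapL (AP k).toSubalgebra.toSubmodule.subtypeL).mapL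
      (evalCLM ℂ x)
    simp only [_root_.smul_apply, lp.coeFn_smul, Pi.smul_apply, smul_eq_mul, coe_expChar,
      mul_comm (apExp k _ x)] at hx
    exact hax.unique hx
  calc V (Column.basisVec q) p = coeff z (V (Column.basisVec q) p • exp z) := by
        rw [map_smul, coeff_exp, if_pos rfl, smul_eq_mul, mul_one]
    _ = a z := by rw [← hseries, coeff_wienerSeries ha]

variable [Fintype ι]

theorem summable_norm_toeplitz_coeff {F : Matrix ι ι (AP k)}
    (hF : ∀ i j, Summable fun g => ‖coeff g (F i j)‖) :
    Summable fun g => ‖toeplitz Λ (F.map fun f => coeff g f • exp g)‖ := by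
  refine .of_nonneg_of_le (fun g => norm_nonneg _) (fun g => norm_toeplitz_le Λ _)
    (summable_sum fun i _ => summable_sum fun j _ => ?_)
  simpa only [Matrix.map_apply, norm_smul, norm_exp, mul_one] using hF i j

theorem modulate_toeplitz {F : Matrix ι ι (AP k)}
    (hF : ∀ i j, Summable fun g => ‖coeff g (F i j)‖) (χ : AddChar (Fin k → ℝ) Circle) :
    modulate χ (toeplitz Λ F) =
      ∑' g, (χ g : ℂ) • toeplitz Λ (F.map fun f => coeff g f • exp g) := by
  refine Column.ext_entries fun p q => ?_
  rw [modulate_basisVec_apply, toeplitz_basisVec_apply]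
  refine HasSum.unique ?_ (hasSum_basisVec_apply
    (summable_circle_smul (summable_norm_toeplitz_coeff hF) χ).hasSum p q)
  convert hasSum_single ((p.2 : Fin k → ℝ) - (q.2 : Fin k → ℝ)) fun g hg => ?_ using 1
  · simp [toeplitz_basisVec_apply, coeff_exp]
  · simp [toeplitz_basisVec_apply, coeff_exp, hg]

theorem exists_summable_bound_inv {F : Matrix ι ι (AP k)}
    (hF : ∀ i j, Summable fun g => ‖coeff g (F i j)‖)
    {T : (Column ι Λ →L[ℂ] Column ι Λ)ˣ} (hT : (T : Column ι Λ →L[ℂ] Column ι Λ) = toeplitz Λ F) :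
    ∃ b : (Fin k → ℝ) → ℝ, Summable b ∧ ∀ p q : ι × Λ,
      ‖T⁻¹.val (Column.basisVec q) p‖ ≤ b ((p.2 : Fin k → ℝ) - (q.2 : Fin k → ℝ)) := by
  have hV (χ : AddChar (Fin k → ℝ) Circle) :
      modulate χ (T⁻¹).val * modulate χ (toeplitz Λ F) = 1 := by
    rw [← map_mul, ← hT, T.inv_mul, map_one]
  obtain ⟨E, hE, hleft⟩ := BochnerPhillips.exists_summable_left_inverse
    (summable_norm_toeplitz_coeff hF)
    fun χ => ⟨_, (congrArg _ (modulate_toeplitz hF χ).symm).trans (hV χ)⟩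
  refine ⟨fun g => ‖E g‖, hE, fun p q => ?_⟩
  rw [basisVec_apply_eq_of_modulate hE (fun χ => ?_) p q]
  · exact norm_basisVec_apply_le _ p q
  · refine (left_inv_eq_right_inv (hleft χ) ?_).symm
    rw [← modulate_toeplitz hF, ← map_mul, ← hT, T.mul_inv, map_one]

end InverseDecay

section SpectralSubalgebras

open scoped Pointwise

theorem coeff_algebraMap (c : ℂ) (x : Fin k → ℝ) :
    coeff x (algebraMap ℂ (AP k) c) = if x = 0 then c else 0 := by
  rw [Algebra.algebraMap_eq_smul_one, ← exp_zero, map_smul, coeff_exp, smul_eq_mul, mul_ite,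
    mul_one, mul_zero]
  simp only [eq_comm]

/-- The algebra `AP^k_Δ` of almost periodic functions with Bohr-Fourier spectrum in the additive
submonoid `Δ`. -/
def spectral (Δ : AddSubmonoid (Fin k → ℝ)) : Subalgebra ℂ (AP k) where
  carrier := {f | ∀ x ∉ Δ, coeff x f = 0}
  add_mem' hf hg x hx := by rw [map_add, hf x hx, hg x hx, add_zero]
  mul_mem' {f g} hf hg x hx := by
    refine (hasSum_coeff_mul f g x).unique (hasSum_zero.congr_fun fun y => ?_)
    by_cases hy : y ∈ Δ
    · rw [hf (x - y) fun hxy => hx (sub_add_cancel x y ▸ Δ.add_mem hxy hy), zero_mul]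
    · rw [hg y hy, mul_zero]
  algebraMap_mem' c x hx := by
    rw [coeff_algebraMap, if_neg fun h => hx (by rw [h]; exact Δ.zero_mem)]

theorem summable_norm_coeff_mul {f g : AP k} (hf : Summable fun x => ‖coeff x f‖)
    (hg : Summable fun x => ‖coeff x g‖) : Summable fun x => ‖coeff x (f * g)‖ := by
  have hshear : Summable fun p : (Fin k → ℝ) × (Fin k → ℝ) =>
      ‖coeff (p.1 - p.2) f * coeff p.2 g‖ := by
    refine (((Equiv.prodComm _ _).trans ((Equiv.refl _).prodShear Equiv.subRight)).summable_iff.2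
      (hg.mul_norm hf)).congr fun p => ?_
    exact congrArg norm (mul_comm _ _)
  refine .of_nonneg_of_le (fun x => norm_nonneg _) (fun x => ?_) hshear.prod
  rw [← (hasSum_coeff_mul f g x).tsum_eq]
  exact norm_tsum_le_tsum_norm (hshear.prod_factor x)

/-- The Wiener algebra `APW^k_Δ` of the elements of `AP^k_Δ` with absolutely convergent
Bohr-Fourier series. -/
def wiener (Δ : AddSubmonoid (Fin k → ℝ)) : Subalgebra ℂ (AP k) where
  carrier := {f | f ∈ spectral Δ ∧ Summable fun x => ‖coeff x f‖}
  add_mem' {f g} hf hg := ⟨add_mem hf.1 hg.1, .of_nonneg_of_le (fun x => norm_nonneg _)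
    (fun x => (congrArg norm (map_add (coeff x) f g)).trans_le (norm_add_le _ _))
    (hf.2.add hg.2)⟩
  mul_mem' hf hg := ⟨mul_mem hf.1 hg.1, summable_norm_coeff_mul hf.2 hg.2⟩
  algebraMap_mem' c := ⟨algebraMap_mem _ c, summable_of_ne_finset_zero (s := {0}) fun x hx => by
    rw [coeff_algebraMap, if_neg (Finset.notMem_singleton.1 hx), norm_zero]⟩

variable {Δ Δ' : AddSubmonoid (Fin k → ℝ)}

theorem wiener_le_spectral : wiener Δ ≤ spectral Δ := fun _ hf => hf.1

theorem spectral_mono (h : Δ ≤ Δ') : spectral Δ ≤ spectral Δ' :=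
  fun _ hf x hx => hf x fun hx' => hx (h hx')

theorem wiener_mono (h : Δ ≤ Δ') : wiener Δ ≤ wiener Δ' := fun _ hf => ⟨spectral_mono h hf.1, hf.2⟩

theorem star_mem_spectral {f : AP k} (hf : f ∈ spectral Δ) : star f ∈ spectral (-Δ) :=
  fun x hx => by rw [coeff_star, hf (-x) hx, star_zero]

theorem star_mem_wiener {f : AP k} (hf : f ∈ wiener Δ) : star f ∈ wiener (-Δ) := by
  refine ⟨star_mem_spectral hf.1, ?_⟩
  simp only [coeff_star, norm_star]
  exact (Equiv.neg (Fin k → ℝ)).summable_iff.2 hf.2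

variable {M : AddSubmonoid (Fin k → ℝ)}

theorem eq_algebraMap_mean (hM : M.IsPointed) {f : AP k} (hf : f ∈ spectral M)
    (hf' : f ∈ spectral (-M)) : f = algebraMap ℂ (AP k) (mean f) := by
  refine ext_coeff fun x => ?_
  rw [coeff_algebraMap]
  split_ifs with hx
  · rw [hx, coeff_zero_left]
  · by_cases hxM : x ∈ M
    · exact hf' x fun hxM' => hx (hM.eq_zero_of_mem_of_neg_mem hxM hxM')
    · exact hf x hxM

theorem mean_mul (hM : M.IsPointed) {f g : AP k} (hf : f ∈ spectral M) (hg : g ∈ spectral M) :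
    mean (f * g) = mean f * mean g := by
  rw [← coeff_zero_left, ← coeff_zero_left, ← coeff_zero_left]
  refine (hasSum_coeff_mul f g 0).unique ?_
  convert hasSum_single (0 : Fin k → ℝ) fun y hy => ?_ using 2
  · rw [sub_zero]
  · by_cases hyM : y ∈ M
    · rw [hf _ fun h => hy (hM.eq_zero_of_mem_of_neg_mem hyM (zero_sub y ▸ h)), zero_mul]
    · rw [hg y hyM, mul_zero]

end SpectralSubalgebras

end AP

theorem exists_ne_zero_forall_sub_mem {G : Type*} [AddCommGroup G] {M : AddSubmonoid G}
    (hM : ∀ x ∈ M, ∀ y ∈ M, x - y ∈ M ∨ y - x ∈ M) {t₀ : G} (ht₀ : t₀ ∈ M) (ht₀' : t₀ ≠ 0)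
    (s : Finset M) : ∃ t ∈ M, t ≠ 0 ∧ ∀ x ∈ s, (x : G) ≠ 0 → (x : G) - t ∈ M := by
  classical
  induction s using Finset.induction_on with
  | empty => exact ⟨t₀, ht₀, ht₀', by simp⟩
  | insert a s _ ih =>
    obtain ⟨t, htM, ht, hts⟩ := ih
    simp only [Finset.forall_mem_insert]
    by_cases ha : (a : G) = 0
    · exact ⟨t, htM, ht, fun h => absurd ha h, hts⟩
    obtain hat | hta := hM a a.2 t htM
    · exact ⟨t, htM, ht, fun _ => hat, hts⟩
    · refine ⟨a, a.2, ha, fun _ => by simp, fun x hx hx0 => ?_⟩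
      rw [← sub_add_sub_cancel _ t]
      exact M.add_mem (hts x hx hx0) hta

namespace AP

variable {k : ℕ}

section Corner

open scoped InnerProduct

theorem norm_le_of_adjoint_comp_comp_eq {H : Type*} [NormedAddCommGroup H] [InnerProductSpace ℂ H]
    [CompleteSpace H] {U : H →ₗᵢ[ℂ] H} {T V : H →L[ℂ] H}
    (hT : U.toContinuousLinearMap† ∘L T ∘L U.toContinuousLinearMap = T) (hVT : V * T = 1)
    {v : H} (hv : (U.toContinuousLinearMap†) (T v) = 0) (w : H) :
    ‖v‖ ≤ (‖V‖ * ‖T‖ + 1) * ‖v - U w‖ := by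
  have hTw : T w = (U.toContinuousLinearMap†) (T (U w - v)) := by
    rw [map_sub, map_sub, hv, sub_zero]
    exact (DFunLike.congr_fun hT w).symm
  have hadj (x : H) : ‖(U.toContinuousLinearMap†) x‖ ≤ ‖x‖ := by
    refine ((U.toContinuousLinearMap†).le_opNorm x).trans
      (mul_le_of_le_one_left (norm_nonneg x) ?_)
    rw [LinearIsometryEquiv.norm_map]
    exact U.norm_toContinuousLinearMap_le
  have hw : ‖w‖ ≤ ‖V‖ * (‖T‖ * ‖v - U w‖) := by
    calc ‖w‖ = ‖V (T w)‖ := by rw [← mul_apply_eq_comp, hVT, one_apply_eq_self]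
      _ ≤ ‖V‖ * ‖T w‖ := V.le_opNorm _
      _ ≤ ‖V‖ * (‖T‖ * ‖v - U w‖) := by
        rw [hTw, norm_sub_rev v]
        gcongr
        exact (hadj _).trans (T.le_opNorm _)
  calc ‖v‖ = ‖U w + (v - U w)‖ := by rw [add_sub_cancel]
    _ ≤ ‖w‖ + ‖v - U w‖ := (norm_add_le _ _).trans_eq (by rw [U.norm_map])
    _ ≤ (‖V‖ * ‖T‖ + 1) * ‖v - U w‖ := by linarith

variable {ι : Type*} {M : AddSubmonoid (Fin k → ℝ)}

/-- Translation of the frequencies in `M` by `t ∈ M`. -/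
def shift (t : M) : (M : Set (Fin k → ℝ)) ↪ (M : Set (Fin k → ℝ)) where
  toFun x := ⟨x + t, M.add_mem x.2 t.2⟩
  inj' _ _ h := Subtype.ext (add_left_injective (t : Fin k → ℝ) (congrArg Subtype.val h))

theorem sum_single_mem_range_embed_shift [DecidableEq ι] {t : M}
    {v : Column ι (M : Set (Fin k → ℝ))} {s : Finset (ι × (M : Set (Fin k → ℝ)))}
    (hs : ∀ p ∈ s, v p ≠ 0 → (p.2 : Fin k → ℝ) - (t : Fin k → ℝ) ∈ M) :
    ∑ p ∈ s, lp.single 2 p (v p) ∈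
      LinearMap.range (Column.embed (ι := ι) (shift t)).toLinearMap := by
  refine Submodule.sum_mem _ fun p hp => ?_
  by_cases hp0 : v p = 0
  · rw [hp0, lp.single_zero]
    exact zero_mem _
  · have hsub := hs p hp hp0
    have hshift : p = (p.1, shift t ⟨(p.2 : Fin k → ℝ) - (t : Fin k → ℝ), hsub⟩) :=
      Prod.ext rfl (Subtype.ext (sub_add_cancel _ _).symm)
    refine ⟨v p • Column.basisVec (p.1, ⟨(p.2 : Fin k → ℝ) - (t : Fin k → ℝ), hsub⟩), ?_⟩
    rw [map_smul]
    refine (congrArg _ (Column.embed_basisVec _ _)).trans ?_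
    rw [← hshift, ← lp.single_smul, smul_eq_mul, mul_one]

variable [Fintype ι] [DecidableEq ι]

theorem eq_zero_of_toeplitz_apply_eq_zero (hM : M.IsPointed)
    (hM' : ∀ x ∈ M, ∀ y ∈ M, x - y ∈ M ∨ y - x ∈ M) {A : Matrix ι ι (AP k)}
    {V : Column ι (M : Set (Fin k → ℝ)) →L[ℂ] Column ι (M : Set (Fin k → ℝ))}
    (hV : V * toeplitz M A = 1) {v : Column ι (M : Set (Fin k → ℝ))}
    (hv : ∀ p, (p.2 : Fin k → ℝ) = 0 → v p = 0)
    (hTv : ∀ p, (p.2 : Fin k → ℝ) ≠ 0 → toeplitz M A v p = 0) : v = 0 := by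
  by_contra hv0
  obtain ⟨p₀, hp₀⟩ : ∃ p, v p ≠ 0 := by
    by_contra! h
    exact hv0 (lp.ext (funext h))
  -- A finite truncation of `v` is a shift `U w`, where `U* T U = T` and `U* (T v) = 0`.
  have hbound (s : Finset (ι × (M : Set (Fin k → ℝ)))) :
      ‖v‖ ≤ (‖V‖ * ‖toeplitz M A‖ + 1) * ‖v - ∑ p ∈ s, lp.single 2 p (v p)‖ := by
    obtain ⟨t, htM, ht, hts⟩ := exists_ne_zero_forall_sub_mem hM' p₀.2.2 (mt (hv p₀) hp₀)
      (s.image Prod.snd)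
    obtain ⟨w, hw⟩ := sum_single_mem_range_embed_shift (t := ⟨t, htM⟩) (v := v) fun p hp hp0 =>
      hts p.2 (Finset.mem_image_of_mem _ hp) (mt (hv p) hp0)
    rw [← hw]
    refine norm_le_of_adjoint_comp_comp_eq (adjoint_embed_comp_toeplitz_comp_embed
      (fun _ _ => add_sub_add_right_eq_sub _ _ _) A) hV (lp.ext (funext fun p => ?_)) w
    rw [Column.adjoint_embed_apply]
    refine hTv _ fun h => ht (hM.eq_zero_of_mem_of_neg_mem htM ?_)
    rw [← eq_neg_of_add_eq_zero_left h]
    exact p.2.2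
  have hlim := (((tendsto_const_nhds (x := v)).sub
    (lp.hasSum_single ENNReal.ofNat_ne_top v)).norm).const_mul (‖V‖ * ‖toeplitz M A‖ + 1)
  rw [sub_self, norm_zero, mul_zero] at hlim
  exact hv0 (norm_le_zero_iff.1 (ge_of_tendsto' hlim hbound))

theorem isUnit_corner (hM : M.IsPointed) (hM' : ∀ x ∈ M, ∀ y ∈ M, x - y ∈ M ∨ y - x ∈ M)
    {A : Matrix ι ι (AP k)}
    {T : (Column ι (M : Set (Fin k → ℝ)) →L[ℂ] Column ι (M : Set (Fin k → ℝ)))ˣ}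
    (hT : T.val = toeplitz M A) :
    IsUnit (Matrix.of fun i j => T⁻¹.val (Column.basisVec (j, 0)) (i, 0)) := by
  rw [← Matrix.mulVec_injective_iff_isUnit]
  refine (injective_iff_map_eq_zero (Matrix.mulVecLin _)).2 fun u hu => ?_
  set x : Column ι (M : Set (Fin k → ℝ)) := ∑ j, u j • Column.basisVec (j, (0 : M))
  have hx (p : ι × (M : Set (Fin k → ℝ))) : x p = if p.2 = 0 then u p.1 else 0 := by
    simp only [x, lp.coeFn_sum, Finset.sum_apply, lp.coeFn_smul, Pi.smul_apply,
      Column.basisVec_apply, Prod.ext_iff, smul_eq_mul, mul_ite, mul_one, mul_zero]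
    by_cases h : p.2 = 0 <;> simp [h]
  have hTx : T.val (T⁻¹.val x) = x := by
    rw [← mul_apply_eq_comp, T.mul_inv, one_apply_eq_self]
  have hzero : T⁻¹.val x = 0 := by
    refine eq_zero_of_toeplitz_apply_eq_zero hM hM' (hT ▸ T.inv_mul : T⁻¹.val * toeplitz M A = 1)
      (fun p hp => ?_) fun p hp => ?_
    · obtain ⟨i, y⟩ := p
      obtain rfl : y = 0 := Subtype.ext hp
      simp only [x, map_sum, map_smul, lp.coeFn_sum, Finset.sum_apply, lp.coeFn_smul,
        Pi.smul_apply, smul_eq_mul]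
      simpa [Matrix.mulVec, dotProduct, mul_comm] using congrFun hu i
    · rw [← hT, hTx, hx, if_neg fun h => hp (congrArg Subtype.val h)]
  ext j
  calc u j = x (j, 0) := by rw [hx, if_pos rfl]
    _ = T.val (T⁻¹.val x) (j, 0) := by rw [hTx]
    _ = 0 := by rw [hzero, map_zero, lp.coeFn_zero, Pi.zero_apply]

end Corner

section WienerSolution

open scoped Pointwise

variable {ι : Type*} {M : AddSubmonoid (Fin k → ℝ)}

theorem exists_mem_wiener_coeff_eq {a : M → ℂ} (ha : Summable fun x => ‖a x‖) :
    ∃ f ∈ wiener M, ∀ x : M, coeff (x : Fin k → ℝ) f = a x := by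
  let c : (Fin k → ℝ) → ℂ := Function.extend Subtype.val a 0
  have hc (x : M) : c x = a x := Subtype.val_injective.extend_apply _ _ x
  have hc' {x : Fin k → ℝ} (hx : x ∉ M) : c x = 0 :=
    Function.extend_apply' _ _ _ fun ⟨y, hy⟩ => hx (hy ▸ y.2)
  have hsum : Summable fun x => ‖c x‖ := by
    refine (Subtype.val_injective.summable_iff fun x hx => ?_).1
      (ha.congr fun x => congrArg norm (hc x).symm)
    rw [Subtype.range_coe] at hx
    exact norm_eq_zero.2 (hc' hx)
  refine ⟨wienerSeries c, ⟨fun x hx => ?_, ?_⟩, fun x => ?_⟩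
  · rw [coeff_wienerSeries hsum, hc' hx]
  · simpa only [coeff_wienerSeries hsum] using hsum
  · rw [coeff_wienerSeries hsum, hc]

variable [Fintype ι] [DecidableEq ι]

theorem exists_wiener_columns {A : Matrix ι ι (AP k)}
    (hA : ∀ i j, Summable fun x => ‖coeff x (A i j)‖)
    {T : (Column ι (M : Set (Fin k → ℝ)) →L[ℂ] Column ι (M : Set (Fin k → ℝ)))ˣ}
    (hT : (T : Column ι (M : Set (Fin k → ℝ)) →L[ℂ] Column ι (M : Set (Fin k → ℝ))) =
      toeplitz M A) :
    ∃ Φ ∈ (wiener M).matrix (n := ι), Φ.map mean =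
        Matrix.of (fun i j => T⁻¹.val (Column.basisVec (j, 0)) (i, 0)) ∧
      ∀ i j, ∀ x ∈ M, coeff x ((A * Φ) i j) = if i = j ∧ x = 0 then 1 else 0 := by
  obtain ⟨b, hb, hle⟩ := exists_summable_bound_inv hA hT
  have hsummable (i j : ι) : Summable fun x : M => ‖T⁻¹.val (Column.basisVec (j, 0)) (i, x)‖ := by
    refine .of_nonneg_of_le (fun x => norm_nonneg _) (fun x => hle (i, x) (j, 0)) ?_
    exact hb.comp_injective ((sub_left_injective (b := (0 : Fin k → ℝ))).comp
      Subtype.val_injective)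
  choose Φ hΦ hcoeff using fun i j => exists_mem_wiener_coeff_eq (hsummable i j)
  refine ⟨Matrix.of Φ, fun i j => hΦ i j, ?_, fun i j x hx => ?_⟩
  · ext i j
    exact (coeff_zero_left _).symm.trans (hcoeff i j 0)
  · calc coeff x ((A * Matrix.of Φ) i j)
        = toeplitz M A (T⁻¹.val (Column.basisVec (j, 0))) (i, ⟨x, hx⟩) :=
          (toeplitz_apply_eq_coeff_mulVec (f := fun l => Φ l j) (fun q => (hcoeff q.1 j q.2).symm)
            (fun l => (hΦ l j).1) (i, ⟨x, hx⟩)).symm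
      _ = (Column.basisVec (j, 0) : Column ι (M : Set (Fin k → ℝ))) (i, ⟨x, hx⟩) := by
          rw [← hT, ← mul_apply_eq_comp, T.mul_inv, one_apply_eq_self]
      _ = if i = j ∧ x = 0 then 1 else 0 := by
          simp only [Column.basisVec_apply, Prod.ext_iff, Subtype.ext_iff]
          rfl

theorem exists_wiener_solution {Sg : AddSubgroup (Fin k → ℝ)} (hM : M.IsPointed)
    (hSg : ∀ x, x ∈ Sg ↔ x ∈ M ∨ -x ∈ M) {A : Matrix ι ι (AP k)}
    (hA : A ∈ (wiener Sg.toAddSubmonoid).matrix (n := ι)) (hT : IsUnit (toeplitz M A)) :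
    ∃ Φ ∈ (wiener M).matrix (n := ι), A * Φ ∈ (wiener (-M)).matrix (n := ι) ∧
      (A * Φ).map mean = 1 ∧ IsUnit (Φ.map mean) := by
  obtain ⟨T, hT⟩ := hT
  obtain ⟨Φ, hΦ, hmean, hcoeff⟩ := exists_wiener_columns (fun i j => (hA i j).2) hT
  have hMSg : M ≤ Sg.toAddSubmonoid := fun x hx => (hSg x).2 (.inl hx)
  have hAΦ := mul_mem hA fun i j => wiener_mono hMSg (hΦ i j)
  refine ⟨Φ, hΦ, fun i j => ⟨fun x hx => ?_, (hAΦ i j).2⟩, ?_, ?_⟩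
  · by_cases hxM : x ∈ M
    · rw [hcoeff i j x hxM, if_neg]
      rintro ⟨-, rfl⟩
      exact hx (zero_mem (-M))
    · exact (hAΦ i j).1 x fun h => ((hSg x).1 h).elim hxM hx
  · ext i j
    rw [Matrix.map_apply, ← coeff_zero_left, hcoeff i j 0 M.zero_mem, Matrix.one_apply]
    simp only [and_true]
  · rw [hmean]
    refine isUnit_corner hM (fun x hx y hy => ?_) hT
    have hsub := (hSg _).1 (sub_mem ((hSg x).2 (.inl hx)) ((hSg y).2 (.inl hy)))
    rwa [neg_sub] at hsub

end WienerSolution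

section Factorization

open scoped Matrix Pointwise

variable {ι : Type*} [Fintype ι] [DecidableEq ι] {B B' : Subalgebra ℂ (AP k)}
  {C M : AddSubmonoid (Fin k → ℝ)} {Sg : AddSubgroup (Fin k → ℝ)}

/-- The group of invertible matrices over `AP^k` which, together with their inverses, have all
entries in `B`. -/
def matrixUnits (ι : Type*) [Fintype ι] [DecidableEq ι] (B : Subalgebra ℂ (AP k)) :
    Subgroup (Matrix ι ι (AP k))ˣ :=
  (B.matrix (n := ι)).toSubmonoid.units

theorem mem_matrixUnits {u : (Matrix ι ι (AP k))ˣ} : u ∈ matrixUnits ι B ↔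
    u.val ∈ B.matrix (n := ι) ∧ u⁻¹.val ∈ B.matrix (n := ι) := Iff.rfl

theorem exists_mem_matrixUnits_iff {P : Matrix ι ι (AP k)} :
    (∃ u ∈ matrixUnits ι B, u.val = P) ↔
      P ∈ B.matrix (n := ι) ∧ ∃ Q ∈ B.matrix (n := ι), P * Q = 1 := by
  constructor
  · rintro ⟨u, hu, rfl⟩
    exact ⟨hu.1, u⁻¹.val, hu.2, u.mul_inv⟩
  · rintro ⟨hP, Q, hQ, hPQ⟩
    exact ⟨⟨P, Q, hPQ, mul_eq_one_comm.1 hPQ⟩, ⟨hP, hQ⟩, rfl⟩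

theorem matrixUnits_mono (h : B ≤ B') : matrixUnits ι B ≤ matrixUnits ι B' :=
  fun _ hu => ⟨fun i j => h (hu.1 i j), fun i j => h (hu.2 i j)⟩

theorem exists_mem_matrixUnits_transpose {u : (Matrix ι ι (AP k))ˣ} (hu : u ∈ matrixUnits ι B) :
    ∃ v ∈ matrixUnits ι B, v.val = u.valᵀ :=
  exists_mem_matrixUnits_iff.2 ⟨fun i j => hu.1 j i, u⁻¹.valᵀ, fun i j => hu.2 j i, by
    rw [← Matrix.transpose_mul, u.inv_mul, Matrix.transpose_one]⟩

theorem exists_transpose_eq_mul_iff {A : Matrix ι ι (AP k)} :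
    (∃ N ∈ matrixUnits ι B', ∃ P ∈ matrixUnits ι B, Aᵀ = N.val * P.val) ↔
      ∃ P ∈ matrixUnits ι B, ∃ N ∈ matrixUnits ι B', A = P.val * N.val := by
  constructor
  · rintro ⟨N, hN, P, hP, hA⟩
    obtain ⟨P', hP', hPP'⟩ := exists_mem_matrixUnits_transpose hP
    obtain ⟨N', hN', hNN'⟩ := exists_mem_matrixUnits_transpose hN
    exact ⟨P', hP', N', hN', by
      rw [hPP', hNN', ← Matrix.transpose_mul, ← hA, A.transpose_transpose]⟩
  · rintro ⟨P, hP, N, hN, rfl⟩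
    obtain ⟨P', hP', hPP'⟩ := exists_mem_matrixUnits_transpose hP
    obtain ⟨N', hN', hNN'⟩ := exists_mem_matrixUnits_transpose hN
    exact ⟨N', hN', P', hP', by rw [hPP', hNN', Matrix.transpose_mul]⟩

theorem map_algebraMap_mem_matrix (K : Matrix ι ι ℂ) (B : Subalgebra ℂ (AP k)) :
    K.map (algebraMap ℂ (AP k)) ∈ B.matrix (n := ι) :=
  fun i j => B.algebraMap_mem (K i j)

theorem exists_eq_mul_of_mul_mul_eq_map_algebraMap {A Φ X : Matrix ι ι (AP k)} {K : Matrix ι ι ℂ}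
    (hΦ : Φ ∈ B.matrix (n := ι)) (hAΦ : A * Φ ∈ B'.matrix (n := ι))
    (hX : X ∈ B'.matrix (n := ι)) (hXA : X * A ∈ B.matrix (n := ι)) (hK : IsUnit K)
    (h : X * (A * Φ) = K.map (algebraMap ℂ (AP k))) :
    ∃ N ∈ matrixUnits ι B', ∃ P ∈ matrixUnits ι B, A = N.val * P.val := by
  obtain ⟨L, -, hLK⟩ := isUnit_iff_exists.1 hK
  set L' := L.map (algebraMap ℂ (AP k))
  have hL' : L' * (X * (A * Φ)) = 1 := by
    rw [h, ← Matrix.map_mul, hLK, Matrix.map_one _ (map_zero _) (map_one _)]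
  have hNN : A * Φ * (L' * X) = 1 := mul_eq_one_comm.1 (by rw [mul_assoc, hL'])
  have hPP : L' * (X * A) * Φ = 1 := by rw [mul_assoc, mul_assoc, hL']
  obtain ⟨N, hN, hNval⟩ := exists_mem_matrixUnits_iff.2
    ⟨hAΦ, L' * X, mul_mem (map_algebraMap_mem_matrix L B') hX, hNN⟩
  obtain ⟨P, hP, hPval⟩ := exists_mem_matrixUnits_iff.2
    ⟨mul_mem (map_algebraMap_mem_matrix L B) hXA, Φ, hΦ, hPP⟩
  refine ⟨N, hN, P, hP, ?_⟩
  rw [hNval, hPval, ← mul_assoc L', ← mul_assoc (A * Φ), hNN, one_mul]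

theorem eq_map_algebraMap_map_mean (hM : M.IsPointed) {F : Matrix ι ι (AP k)}
    (hF : F ∈ (spectral M).matrix (n := ι)) (hF' : F ∈ (spectral (-M)).matrix (n := ι)) :
    F = (F.map mean).map (algebraMap ℂ (AP k)) :=
  Matrix.ext fun i j => eq_algebraMap_mean hM (hF i j) (hF' i j)

theorem map_mean_mul (hM : M.IsPointed) {F F' : Matrix ι ι (AP k)}
    (hF : F ∈ (spectral M).matrix (n := ι)) (hF' : F' ∈ (spectral M).matrix (n := ι)) :
    (F * F').map mean = F.map mean * F'.map mean := by
  ext i j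
  simp only [Matrix.map_apply, Matrix.mul_apply, map_sum]
  exact Finset.sum_congr rfl fun l _ => mean_mul hM (hF i l) (hF' l j)

theorem exists_wiener_factorization (hM : M.IsPointed) (hSg : ∀ x, x ∈ Sg ↔ x ∈ M ∨ -x ∈ M)
    {A : Matrix ι ι (AP k)} (hA : A ∈ (wiener Sg.toAddSubmonoid).matrix (n := ι))
    (hT : IsUnit (toeplitz M A)) :
    ∃ N ∈ matrixUnits ι (wiener (-M)), ∃ P ∈ matrixUnits ι (wiener M), A = N.val * P.val := by
  have hAstar : Aᴴ ∈ (wiener Sg.toAddSubmonoid).matrix (n := ι) := fun i j =>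
    wiener_mono (fun x (hx : -x ∈ Sg) => show x ∈ Sg from neg_mem_iff.1 hx)
      (star_mem_wiener (hA j i))
  have hTstar : IsUnit (toeplitz M Aᴴ) := by
    rw [← adjoint_toeplitz]
    exact hT.star
  obtain ⟨Φ, hΦ, hAΦ, -, hunit⟩ := exists_wiener_solution hM hSg hA hT
  obtain ⟨Y, hY, hAY, hmean, -⟩ := exists_wiener_solution hM hSg hAstar hTstar
  have hX : Yᴴ ∈ (wiener (-M)).matrix (n := ι) := fun i j => star_mem_wiener (hY j i)
  have hXA_eq : Yᴴ * A = (Aᴴ * Y)ᴴ := by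
    rw [Matrix.conjTranspose_mul, Matrix.conjTranspose_conjTranspose]
  have hXA : Yᴴ * A ∈ (wiener M).matrix (n := ι) := fun i j => by
    rw [hXA_eq, ← neg_neg M]
    exact star_mem_wiener (hAY j i)
  have hXA_mean : (Yᴴ * A).map mean = 1 := by
    rw [hXA_eq, ← Matrix.conjTranspose_one, ← hmean]
    ext i j
    exact mean_star _
  have hprod : (Yᴴ * (A * Φ)).map mean = Φ.map mean := by
    rw [← mul_assoc, map_mean_mul hM (fun i j => (hXA i j).1) fun i j => (hΦ i j).1, hXA_mean,
      one_mul]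
  refine exists_eq_mul_of_mul_mul_eq_map_algebraMap hΦ hAΦ hX hXA hunit ?_
  rw [← hprod]
  refine eq_map_algebraMap_map_mean hM (fun i j => ?_) fun i j => (mul_mem hX hAΦ i j).1
  rw [← mul_assoc]
  exact (mul_mem hXA hΦ i j).1

theorem isUnit_toeplitz_of_eq_mul {N P : (Matrix ι ι (AP k))ˣ}
    (hN : N ∈ matrixUnits ι (spectral (-M))) (hP : P ∈ matrixUnits ι (spectral M)) :
    IsUnit (toeplitz M (N.val * P.val)) := by
  rw [mem_matrixUnits] at hN hP
  have hplus (A : Matrix ι ι (AP k)) {F : Matrix ι ι (AP k)}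
      (hF : F ∈ (spectral M).matrix (n := ι)) :
      toeplitz M (A * F) = toeplitz M A * toeplitz M F :=
    toeplitz_mul_of_right A fun i j x hx y hy =>
      hF i j _ fun h => hy (sub_add_cancel y x ▸ M.add_mem h hx)
  have hminus {F : Matrix ι ι (AP k)} (hF : F ∈ (spectral (-M)).matrix (n := ι))
      (A : Matrix ι ι (AP k)) : toeplitz M (F * A) = toeplitz M F * toeplitz M A :=
    toeplitz_mul_of_left A fun i j x hx y hy => hF i j _ fun h => hx <| by
      rw [AddSubmonoid.mem_neg, neg_sub] at h
      exact sub_add_cancel x y ▸ M.add_mem h hy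
  have hTN : IsUnit (toeplitz M N.val) := isUnit_iff_exists.2 ⟨toeplitz M N⁻¹.val,
    by rw [← hminus hN.1, N.mul_inv, toeplitz_one],
    by rw [← hminus hN.2, N.inv_mul, toeplitz_one]⟩
  have hTP : IsUnit (toeplitz M P.val) := isUnit_iff_exists.2 ⟨toeplitz M P⁻¹.val,
    by rw [← hplus _ hP.2, P.mul_inv, toeplitz_one],
    by rw [← hplus _ hP.1, P.inv_mul, toeplitz_one]⟩
  rw [hplus _ hP.1]
  exact hTN.mul hTP

end Factorization

section Uniqueness

open scoped Matrix Pointwise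

variable {ι : Type*} [Fintype ι] [DecidableEq ι] {B B' : Subalgebra ℂ (AP k)}
  {M : AddSubmonoid (Fin k → ℝ)} {lam : ι → Fin k → ℝ}

theorem eq_zero_of_eq_exp_mul (hM : M.IsPointed) {f g : AP k} (hf : f ∈ spectral M)
    (hg : g ∈ spectral (-M)) {a : Fin k → ℝ} (ha : a ∈ M) (ha0 : a ≠ 0) (h : g = exp a * f) :
    g = 0 := by
  refine eq_zero_of_coeff_eq_zero fun x => ?_
  by_cases hx : -x ∈ M
  · rw [h, coeff_exp_mul]
    refine hf _ fun hxa => ha0 (hM.eq_zero_of_mem_of_neg_mem ha ?_)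
    exact (by abel : x - a + -x = -a) ▸ M.add_mem hxa hx
  · exact hg x hx

theorem eq_zero_of_eq_mul_diagonal_exp (hM : M.IsPointed) (hM' : M.IsSpanning)
    {U V : (Matrix ι ι (AP k))ˣ} (hU : U ∈ matrixUnits ι (spectral M))
    (hV : V ∈ matrixUnits ι (spectral (-M)))
    (h : V.val = U.val * Matrix.diagonal fun j => exp (lam j)) : lam = 0 := by
  rw [mem_matrixUnits] at hU hV
  by_contra hlam
  obtain ⟨j, hj⟩ := Function.ne_iff.1 hlam
  have hone : ∑ i, V⁻¹.val j i * V.val i j = 1 := by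
    rw [← Matrix.mul_apply, V.inv_mul, Matrix.one_apply_eq]
  have : Nontrivial (AP k) := NormOneClass.nontrivial
  refine zero_ne_one ((Finset.sum_eq_zero fun i _ => ?_).symm.trans hone)
  rcases hM'.mem_or_neg_mem (lam j) with hjM | hjM
  · refine mul_eq_zero_of_right _ (eq_zero_of_eq_exp_mul hM (hU.1 i j) (hV.1 i j) hjM hj ?_)
    rw [h, Matrix.mul_diagonal, mul_comm]
  · have hinv : U⁻¹.val = (Matrix.diagonal fun j => exp (lam j)) * V⁻¹.val := by
      rw [Units.eq_mul_inv_iff_mul_eq, h, Units.inv_mul_cancel_left]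
    refine mul_eq_zero_of_left (eq_zero_of_eq_exp_mul hM (hU.2 j i) (hV.2 j i) hjM
      (neg_ne_zero.2 hj) ?_) _
    rw [hinv, Matrix.diagonal_mul, ← mul_assoc, ← exp_add, neg_add_cancel, exp_zero, one_mul]

theorem mem_matrixUnits_of_mem_of_mem_neg (hM : M.IsPointed) {U : (Matrix ι ι (AP k))ˣ}
    (hU : U ∈ matrixUnits ι (spectral M)) (hU' : U ∈ matrixUnits ι (spectral (-M)))
    (B : Subalgebra ℂ (AP k)) : U ∈ matrixUnits ι B := by
  rw [mem_matrixUnits] at hU hU' ⊢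
  rw [eq_map_algebraMap_map_mean hM hU.1 hU'.1, eq_map_algebraMap_map_mean hM hU.2 hU'.2]
  exact ⟨map_algebraMap_mem_matrix _ B, map_algebraMap_mem_matrix _ B⟩

theorem eq_zero_and_mem_matrixUnits_of_mul_eq (hM : M.IsPointed) (hM' : M.IsSpanning)
    (hB : B ≤ spectral M) (hB' : B' ≤ spectral (-M)) {P N P' N' : (Matrix ι ι (AP k))ˣ}
    (hP : P ∈ matrixUnits ι B) (hN : N ∈ matrixUnits ι B')
    (hP' : P' ∈ matrixUnits ι (spectral M)) (hN' : N' ∈ matrixUnits ι (spectral (-M)))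
    (h : P.val * N.val = P'.val * Matrix.diagonal (fun j => exp (lam j)) * N'.val) :
    lam = 0 ∧ P' ∈ matrixUnits ι B ∧ N' ∈ matrixUnits ι B' := by
  have hU : P⁻¹ * P' ∈ matrixUnits ι (spectral M) :=
    mul_mem (inv_mem (matrixUnits_mono hB hP)) hP'
  have hV : N * N'⁻¹ ∈ matrixUnits ι (spectral (-M)) :=
    mul_mem (matrixUnits_mono hB' hN) (inv_mem hN')
  have hVU : (N * N'⁻¹).val = (P⁻¹ * P').val * Matrix.diagonal fun j => exp (lam j) := by
    rw [Units.val_mul, Units.val_mul, Units.mul_inv_eq_iff_eq_mul, mul_assoc, mul_assoc,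
      ← mul_assoc P'.val, Units.eq_inv_mul_iff_mul_eq, h]
  have hlam : lam = 0 := eq_zero_of_eq_mul_diagonal_exp hM hM' hU hV hVU
  have hVU' : N * N'⁻¹ = P⁻¹ * P' := Units.ext <| by
    rw [hVU, hlam]
    simp only [Pi.zero_apply, exp_zero, Matrix.diagonal_one, mul_one]
  have hconst := mem_matrixUnits_of_mem_of_mem_neg hM hU (hVU' ▸ hV)
  refine ⟨hlam, ?_, ?_⟩
  · exact mul_inv_cancel_left P P' ▸ mul_mem hP (hconst B)
  · rw [show N' = (P⁻¹ * P')⁻¹ * N by rw [← hVU']; group]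
    exact mul_mem (inv_mem (hconst B')) hN

theorem tfae_factorization (hM : M.IsPointed) (hM' : M.IsSpanning) {Sg : AddSubgroup (Fin k → ℝ)}
    {A : Matrix ι ι (AP k)} (hA : A ∈ (wiener Sg.toAddSubmonoid).matrix (n := ι)) : List.TFAE [
      ∃ P ∈ matrixUnits ι (spectral M), ∃ N ∈ matrixUnits ι (spectral (-M)), A = P.val * N.val,
      IsUnit (toeplitz (M ∩ Set.univ : Set (Fin k → ℝ)) Aᵀ),
      IsUnit (toeplitz (M ∩ Sg : Set (Fin k → ℝ)) Aᵀ),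
      ∃ P ∈ matrixUnits ι (wiener (M ⊓ Sg.toAddSubmonoid)),
        ∃ N ∈ matrixUnits ι (wiener (-(M ⊓ Sg.toAddSubmonoid))), A = P.val * N.val] := by
  tfae_have 1 → 2 := fun h => by
    obtain ⟨N, hN, P, hP, hNP⟩ := exists_transpose_eq_mul_iff.2 h
    rw [hNP, Set.inter_univ]
    exact isUnit_toeplitz_of_eq_mul hN hP
  tfae_have 2 → 3 := isUnit_toeplitz_of_subset
    (Set.inter_subset_inter_right _ (Set.subset_univ _)) fun i j x hx y hy hyM => by
      have hyx : y - x ∉ Sg := fun h => hyM ⟨hy.1, (sub_add_cancel y x ▸ Sg.add_mem h hx.2 :)⟩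
      exact ⟨(hA j i).1 _ hyx, (hA j i).1 _ fun h => hyx (neg_sub x y ▸ Sg.neg_mem h)⟩
  tfae_have 3 → 4 := fun h => by
    refine exists_transpose_eq_mul_iff.1 (exists_wiener_factorization
      (M := M ⊓ Sg.toAddSubmonoid) (Sg := Sg) (fun x hx hx' => hM x hx.1 hx'.1) (fun x => ?_)
      (fun i j => hA j i) h)
    refine ⟨fun hx => ?_, ?_⟩
    · exact (hM'.mem_or_neg_mem x).imp (⟨·, hx⟩) (⟨·, Sg.neg_mem hx⟩)
    · rintro (hx | hx)
      exacts [hx.2, neg_mem_iff.1 hx.2]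
  tfae_have 4 → 1 := by
    rintro ⟨P, hP, N, hN, h⟩
    exact ⟨P, matrixUnits_mono (wiener_le_spectral.trans (spectral_mono inf_le_left)) hP,
      N, matrixUnits_mono (wiener_le_spectral.trans (spectral_mono
        ((AddSubmonoid.neg_le_neg _ _).2 inf_le_left))) hN, h⟩
  tfae_finish

end Uniqueness

section Bridge

open scoped Matrix Pointwise

variable {ι : Type*} [Fintype ι] [DecidableEq ι] {B B' : Subalgebra ℂ (AP k)}
  {Δ : AddSubmonoid (Fin k → ℝ)}

theorem apmem_iff_exists_mem_spectral {D : Set (Fin k → ℝ)} (hD : D = Δ) (f : APB k) :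
    APmem k D f ↔ ∃ g ∈ spectral Δ, (g : APB k) = f := by
  subst hD
  have spectrum_subset_iff (g : AP k) : bohrSpectrum k (g : APB k) ⊆ Δ ↔ g ∈ spectral Δ := by
    refine forall_congr' fun x => ?_
    rw [← not_imp_not, ← bohrCoeff_coe]
    exact imp_congr_right fun _ => not_not
  constructor
  · rintro ⟨hf, hf'⟩
    exact ⟨⟨f, hf⟩, (spectrum_subset_iff ⟨f, hf⟩).1 hf', rfl⟩
  · rintro ⟨g, hg, rfl⟩
    exact ⟨g.2, (spectrum_subset_iff g).2 hg⟩

theorem apwmem_iff_exists_mem_wiener {D : Set (Fin k → ℝ)} (hD : D = Δ) (f : APB k) :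
    APWmem k D f ↔ ∃ g ∈ wiener Δ, (g : APB k) = f := by
  rw [APWmem, apmem_iff_exists_mem_spectral hD]
  constructor
  · rintro ⟨⟨g, hg, rfl⟩, hf⟩
    exact ⟨g, ⟨hg, by simpa only [bohrCoeff_coe] using hf⟩, rfl⟩
  · rintro ⟨g, hg, rfl⟩
    exact ⟨⟨g, hg.1, rfl⟩, by simpa only [bohrCoeff_coe] using hg.2⟩

/-- The inclusion of the matrices over `AP^k` into the matrices over the algebra of bounded
continuous functions. -/
def matrixIncl (k : ℕ) (ι : Type*) [Fintype ι] [DecidableEq ι] :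
    Matrix ι ι (AP k) →+* Matrix ι ι (APB k) :=
  ((AP k).subtype : AP k →+* APB k).mapMatrix

theorem matrixIncl_injective : Function.Injective (matrixIncl k ι) := fun _ _ h =>
  Matrix.ext fun i j => Subtype.ext (congrFun₂ h i j)

theorem exists_matrixIncl_eq {p : APB k → Prop} (hp : ∀ f, p f ↔ ∃ g ∈ B, (g : APB k) = f)
    (G : Matrix ι ι (APB k)) :
    (∀ i j, p (G i j)) ↔ ∃ A ∈ B.matrix (n := ι), matrixIncl k ι A = G := by
  constructor
  · intro h
    choose A hA hAG using fun i j => (hp _).1 (h i j)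
    exact ⟨Matrix.of A, hA, Matrix.ext hAG⟩
  · rintro ⟨A, hA, rfl⟩ i j
    exact (hp _).2 ⟨A i j, hA i j, rfl⟩

theorem exists_mem_matrixUnits_matrixIncl_eq {p : APB k → Prop}
    (hp : ∀ f, p f ↔ ∃ g ∈ B, (g : APB k) = f) (G : Matrix ι ι (APB k)) :
    ((∀ i j, p (G i j)) ∧ ∃ G' : Matrix ι ι (APB k), (∀ i j, p (G' i j)) ∧ G * G' = 1) ↔
      ∃ u ∈ matrixUnits ι B, matrixIncl k ι u.val = G := by
  simp only [exists_matrixIncl_eq hp]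
  constructor
  · rintro ⟨⟨P, hP, rfl⟩, _, ⟨Q, hQ, rfl⟩, h⟩
    obtain ⟨u, hu, rfl⟩ := exists_mem_matrixUnits_iff.2 ⟨hP, Q, hQ,
      matrixIncl_injective (by rw [map_mul, h, map_one])⟩
    exact ⟨u, hu, rfl⟩
  · rintro ⟨u, hu, rfl⟩
    rw [mem_matrixUnits] at hu
    exact ⟨⟨_, hu.1, rfl⟩, _, ⟨_, hu.2, rfl⟩, by rw [← map_mul, u.mul_inv, map_one]⟩

theorem factorization_iff_exists_units {p q : APB k → Prop}
    (hp : ∀ f, p f ↔ ∃ g ∈ B, (g : APB k) = f) (hq : ∀ f, q f ↔ ∃ g ∈ B', (g : APB k) = f)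
    {A : Matrix ι ι (AP k)} {lam : ι → Fin k → ℝ} {r : Prop} {Gp Gm : Matrix ι ι (APB k)} :
    ((∀ i j, p (Gp i j)) ∧ (∀ i j, q (Gm i j)) ∧ r ∧
      (∃ Gpr : Matrix ι ι (APB k), (∀ i j, p (Gpr i j)) ∧ Gp * Gpr = 1) ∧
      (∃ Gml : Matrix ι ι (APB k), (∀ i j, q (Gml i j)) ∧ Gml * Gm = 1) ∧
      matrixIncl k ι A = Gp * Matrix.diagonal (fun j => apExp k (lam j)) * Gm) ↔
    r ∧ ∃ P ∈ matrixUnits ι B, ∃ N ∈ matrixUnits ι B', matrixIncl k ι P.val = Gp ∧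
      matrixIncl k ι N.val = Gm ∧
      A = P.val * Matrix.diagonal (fun j => exp (lam j)) * N.val := by
  have hdiag : Matrix.diagonal (fun j => apExp k (lam j)) =
      matrixIncl k ι (Matrix.diagonal fun j => exp (lam j)) := by
    rw [matrixIncl, RingHom.mapMatrix_apply, Matrix.diagonal_map (map_zero _)]
    rfl
  have hGp := exists_mem_matrixUnits_matrixIncl_eq hp Gp
  have hGm := exists_mem_matrixUnits_matrixIncl_eq hq Gm
  simp only [hdiag, mul_eq_one_comm (b := Gm)]
  constructor
  · rintro ⟨hp, hq, hr, hp', hq', hA⟩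
    obtain ⟨P, hP, rfl⟩ := hGp.1 ⟨hp, hp'⟩
    obtain ⟨N, hN, rfl⟩ := hGm.1 ⟨hq, hq'⟩
    exact ⟨hr, P, hP, N, hN, rfl, rfl, matrixIncl_injective (by rw [map_mul, map_mul, hA])⟩
  · rintro ⟨hr, P, hP, N, hN, rfl, rfl, rfl⟩
    obtain ⟨hp, hp'⟩ := hGp.2 ⟨P, hP, rfl⟩
    obtain ⟨hq, hq'⟩ := hGm.2 ⟨N, hN, rfl⟩
    exact ⟨hp, hq, hr, hp', hq', by rw [map_mul, map_mul]⟩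

theorem isUnit_iff_clmInvertible {E : Type*} [NormedAddCommGroup E] [NormedSpace ℂ E]
    {T : E →L[ℂ] E} : IsUnit T ↔ CLMInvertible T :=
  isUnit_iff_exists.trans (exists_congr fun _ => and_comm)

variable {n : ℕ} {C : AddSubmonoid (Fin k → ℝ)} {Sg : AddSubgroup (Fin k → ℝ)}
  {A : Matrix (Fin n) (Fin n) (AP k)} {lam : Fin n → Fin k → ℝ}
  {Gp Gm : Matrix (Fin n) (Fin n) (APB k)}

theorem isAPFactorization_iff :
    IsAPFactorization k C Set.univ (matrixIncl k (Fin n) A) lam Gp Gm ↔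
      ∃ P ∈ matrixUnits (Fin n) (spectral C), ∃ N ∈ matrixUnits (Fin n) (spectral (-C)),
        matrixIncl k (Fin n) P.val = Gp ∧ matrixIncl k (Fin n) N.val = Gm ∧
        A = P.val * Matrix.diagonal (fun j => exp (lam j)) * N.val :=
  (factorization_iff_exists_units (r := ∀ j, lam j ∈ Set.univ)
    (apmem_iff_exists_mem_spectral (Δ := C) (Set.univ_inter _))
    (apmem_iff_exists_mem_spectral (Δ := -C) (Set.univ_inter _))).trans
    (and_iff_right fun _ => Set.mem_univ _)

theorem isAPWFactorization_iff :
    IsAPWFactorization k C Sg (matrixIncl k (Fin n) A) lam Gp Gm ↔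
      (∀ j, lam j ∈ Sg) ∧ ∃ P ∈ matrixUnits (Fin n) (wiener (C ⊓ Sg.toAddSubmonoid)),
        ∃ N ∈ matrixUnits (Fin n) (wiener (-(C ⊓ Sg.toAddSubmonoid))),
          matrixIncl k (Fin n) P.val = Gp ∧ matrixIncl k (Fin n) N.val = Gm ∧
          A = P.val * Matrix.diagonal (fun j => exp (lam j)) * N.val :=
  factorization_iff_exists_units (apwmem_iff_exists_mem_wiener (Set.inter_comm _ _))
    (apwmem_iff_exists_mem_wiener (Set.ext fun _ => and_comm.trans
      (and_congr_right fun _ => neg_mem_iff.symm)))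

theorem exists_isAPFactorization_zero_iff :
    (∃ Gp Gm, IsAPFactorization k C Set.univ (matrixIncl k (Fin n) A)
      (fun _ : Fin n => (0 : Fin k → ℝ)) Gp Gm) ↔
      ∃ P ∈ matrixUnits (Fin n) (spectral C), ∃ N ∈ matrixUnits (Fin n) (spectral (-C)),
        A = P.val * N.val := by
  simp only [isAPFactorization_iff, exp_zero, Matrix.diagonal_one, mul_one]
  constructor
  · rintro ⟨_, _, P, hP, N, hN, -, -, h⟩
    exact ⟨P, hP, N, hN, h⟩
  · rintro ⟨P, hP, N, hN, h⟩
    exact ⟨_, _, P, hP, N, hN, rfl, rfl, h⟩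

theorem representsToeplitz_iff {S Λ : Set (Fin k → ℝ)}
    {T : BesCol k n (S ∩ Λ) →L[ℂ] BesCol k n (S ∩ Λ)} :
    RepresentsToeplitz k S Λ n n (matrixIncl k (Fin n) A) T ↔ T = toeplitz (S ∩ Λ) A := by
  refine ⟨fun h => eq_toeplitz_iff.2 fun p q => ?_, fun h j μ i ν => ?_⟩
  · rw [← Column.inner_basisVec_left, h]
    exact bohrCoeff_coe _ _
  · rw [Column.inner_basisVec_left, eq_toeplitz_iff.1 h]
    exact (bohrCoeff_coe _ _).symm

end Bridge

end AP

namespace IsHalfspace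

/-- A halfspace of `ℝ^k`, as an additive submonoid. -/
def toAddSubmonoid {k : ℕ} {S : Set (Fin k → ℝ)} (hS : IsHalfspace k S) :
    AddSubmonoid (Fin k → ℝ) where
  carrier := S
  add_mem' hx hy := hS.add_mem _ hx _ hy
  zero_mem' := (hS.inter.symm.subset rfl).1

variable {k : ℕ} {S : Set (Fin k → ℝ)} (hS : IsHalfspace k S)

theorem isPointed_toAddSubmonoid : hS.toAddSubmonoid.IsPointed :=
  fun _ hx hx' => hS.inter.subset ⟨hx, hx'⟩

theorem isSpanning_toAddSubmonoid : hS.toAddSubmonoid.IsSpanning :=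
  fun x => hS.union.symm.subset (Set.mem_univ x)

end IsHalfspace

theorem canonical_factorization_iff_toeplitz_invertible_general (k n : ℕ)
    (C : AddSubmonoid (Fin k → ℝ)) (hC : C.IsPointed) (hC' : C.IsSpanning)
    (Sg : AddSubgroup (Fin k → ℝ))
    (G : Matrix (Fin n) (Fin n) (APB k))
    (hG : ∀ i j, APWmem k (↑Sg) (G i j)) :
    ∀ T : BesCol k n (C ∩ Set.univ) →L[ℂ] BesCol k n (C ∩ Set.univ),
      RepresentsToeplitz k C Set.univ n n G.transpose T →
      (((∃ Gp Gm, IsAPFactorization k C Set.univ G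
            (fun _ : Fin n => (0 : Fin k → ℝ)) Gp Gm) ↔ CLMInvertible T) ∧
       ((∃ Gp Gm, IsAPFactorization k C Set.univ G
            (fun _ : Fin n => (0 : Fin k → ℝ)) Gp Gm) →
         ((∀ T' : BesCol k n (C ∩ ↑Sg) →L[ℂ] BesCol k n (C ∩ ↑Sg),
            RepresentsToeplitz k C (↑Sg) n n G.transpose T' → CLMInvertible T') ∧
          (∀ (lam : Fin n → (Fin k → ℝ)) Gp Gm,
            IsAPFactorization k C Set.univ G lam Gp Gm →
              (lam = fun _ => (0 : Fin k → ℝ)) ∧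
              IsAPWFactorization k C (↑Sg) G lam Gp Gm)))) := by
  obtain ⟨A, hA, rfl⟩ := (AP.exists_matrixIncl_eq (AP.apwmem_iff_exists_mem_wiener
    (Δ := Sg.toAddSubmonoid) rfl) G).1 hG
  have htfae := AP.tfae_factorization hC hC' hA
  intro T hT
  obtain rfl := AP.representsToeplitz_iff.1 hT
  rw [AP.exists_isAPFactorization_zero_iff, ← AP.isUnit_iff_clmInvertible]
  refine ⟨htfae.out 0 1, fun h => ⟨fun T' hT' => ?_, fun lam Gp Gm hfac => ?_⟩⟩
  · obtain rfl := AP.representsToeplitz_iff.1 hT'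
    exact AP.isUnit_iff_clmInvertible.1 ((htfae.out 0 2).1 h)
  · obtain ⟨P, hP, N, hN, hPN⟩ := (htfae.out 0 3).1 h
    obtain ⟨P', hP', N', hN', rfl, rfl, hA'⟩ := AP.isAPFactorization_iff.1 hfac
    obtain ⟨rfl, hP'W, hN'W⟩ := AP.eq_zero_and_mem_matrixUnits_of_mul_eq hC hC'
      (AP.wiener_le_spectral.trans (AP.spectral_mono inf_le_left))
      (AP.wiener_le_spectral.trans (AP.spectral_mono
        ((AddSubmonoid.neg_le_neg _ _).2 inf_le_left))) hP hN hP' hN' (hPN.symm.trans hA')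
    exact ⟨rfl, AP.isAPWFactorization_iff.2
      ⟨fun _ => Sg.zero_mem, P', hP'W, N', hN'W, rfl, rfl, hA'⟩⟩

/-- **Theorem 4.1.**  Let `S ⊂ ℝ^k` be a halfspace, `Σ` an additive subgroup
of `ℝ^k`, and `G ∈ (APW^k_Σ)^{n×n}`.  Then `G` admits a canonical left
`(AP_S)_{ℝ^k}` factorization if and only if the Toeplitz operator
`T(Gᵀ)_{S,ℝ^k}` is invertible; in that case `T(Gᵀ)_{S,Σ}` is invertible as
well, and any `(AP_S)_{ℝ^k}` factorization of `G` is automatically a canonical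
`(APW_S)_Σ` factorization. -/
theorem canonical_factorization_iff_toeplitz_invertible (k n : ℕ)
    (S : Set (Fin k → ℝ)) (hS : IsHalfspace k S)
    (Sg : AddSubgroup (Fin k → ℝ))
    (G : Matrix (Fin n) (Fin n) (APB k))
    (hG : ∀ i j, APWmem k (↑Sg) (G i j)) :
    ∀ T : BesCol k n (S ∩ Set.univ) →L[ℂ] BesCol k n (S ∩ Set.univ),
      RepresentsToeplitz k S Set.univ n n G.transpose T →
      (((∃ Gp Gm, IsAPFactorization k S Set.univ G
            (fun _ : Fin n => (0 : Fin k → ℝ)) Gp Gm) ↔ CLMInvertible T) ∧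
       ((∃ Gp Gm, IsAPFactorization k S Set.univ G
            (fun _ : Fin n => (0 : Fin k → ℝ)) Gp Gm) →
         ((∀ T' : BesCol k n (S ∩ ↑Sg) →L[ℂ] BesCol k n (S ∩ ↑Sg),
            RepresentsToeplitz k S (↑Sg) n n G.transpose T' → CLMInvertible T') ∧
          (∀ (lam : Fin n → (Fin k → ℝ)) Gp Gm,
            IsAPFactorization k S Set.univ G lam Gp Gm →
              (lam = fun _ => (0 : Fin k → ℝ)) ∧
              IsAPWFactorization k S (↑Sg) G lam Gp Gm)))) :=
  canonical_factorization_iff_toeplitz_invertible_general k n hS.toAddSubmonoid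
    hS.isPointed_toAddSubmonoid hS.isSpanning_toAddSubmonoid Sg G hG
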